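/- arXiv:1902.03641 — 2 statements merged into one kernel-verified Lean document; each statement's English description precedes it below -/
import Mathlib

section
/- Let K be any field, let E be a finite graph, and let w ∈ E^0 be a vertex such that w emits exactly one edge f, f is not a loop, and w receives edges from at most one vertex (i.e., |s^{-1}(w)| = 1, r(s^{-1}(w)) ≠ {w}, and either w is a source or |s(r^{-1}(w))| = 1). Let G be the Move (R) at w graph. Then L_K(E) is Morita equivalent to L_K(G). -/
/-!
Write `G` for the Move (R) graph of `E` at `w`. The equivalence sends an `L_K(E)`-module `M` to
`(1 - w) M`.

The elements `v` (`v ≠ w`), `e` (`e` an old edge) and `e f` (in place of `[ef]`) of `L_K(E)`,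
together with the corresponding ghosts, satisfy the relations of `L_K(G)`; the relation at a vertex
emitting edges into `w` uses `w = f f*`, which holds because `w` emits only `f`. This is the family
`MoveR.down`. Its vertices sum to `1 - w`, so that it makes `(1 - w) M` a module over `L_K(G)`. In
general, a `LeavittFamily` with vertex sum `p` turns `M ↦ pM` into a functor
(`LeavittFamily.cutFunctor`).

* Faithful: `m = (1 - w) m + f (f* m)` and `f* m` lies in `(1 - w) M`, because `f` is not a loop
  (`MoveR.decomp`); so a homomorphism is determined by its restriction to `(1 - w) M`.
* Full: a homomorphism `h : (1 - w) M → (1 - w) M'` extends to `M` as `h` on `(1 - w) M` and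
  `f h f*` on `w M` (`MoveR.liftLinear`, `MoveR.map_liftLinear`).
* Essentially surjective: given an `L_K(G)`-module `N`, the space `N × r(f) N` is an
  `L_K(E)`-module in which the second factor is the value at `w` and `f` identifies it with the
  copy of `r(f) N` in the first factor. It is cut out of `N × N` by the family `MoveR.up`, and the
  first coordinate identifies its part under `1 - w` with `N` (`MoveR.fstEquiv`).
-/

/-! ## Finite directed graphs -/

structure FinGraph where
  V : Type
  E : Type
  [fintypeV : Fintype V]
  [fintypeE : Fintype E]
  [decEqV : DecidableEq V]
  [decEqE : DecidableEq E]
  s : E → V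
  r : E → V

attribute [instance] FinGraph.fintypeV FinGraph.fintypeE FinGraph.decEqV FinGraph.decEqE

namespace FinGraph

/-- A vertex is regular if it emits at least one edge. -/
def IsRegular (G : FinGraph) (v : G.V) : Prop := ∃ e : G.E, G.s e = v

/-- A sink emits no edges. -/
def IsSink (G : FinGraph) (v : G.V) : Prop := ∀ e : G.E, G.s e ≠ v

/-- A source receives no edges. -/
def IsSource (G : FinGraph) (v : G.V) : Prop := ∀ e : G.E, G.r e ≠ v

/-- A graph is totally looped if every regular vertex is the base of a loop. -/
def TotallyLooped (G : FinGraph) : Prop :=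
  ∀ v : G.V, G.IsRegular v → ∃ e : G.E, G.s e = v ∧ G.r e = v

/-- A set of vertices is hereditary if it is closed under ranges of edges emitted
from its elements (equivalently, under reachability by paths). -/
def Hereditary (G : FinGraph) (T : Finset G.V) : Prop :=
  ∀ e : G.E, G.s e ∈ T → G.r e ∈ T

/-- A set of vertices `H` is saturated if every regular vertex all of whose emitted
edges end in `H` belongs to `H`. -/
def Saturated (G : FinGraph) (H : Set G.V) : Prop :=
  ∀ v : G.V, G.IsRegular v → (∀ e : G.E, G.s e = v → G.r e ∈ H) → v ∈ H

/-- The trivial graph: one vertex, no edges. -/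
def IsTrivial (G : FinGraph) : Prop :=
  Nonempty G.V ∧ Subsingleton G.V ∧ IsEmpty G.E

/-- A graph is source-free if every vertex receives at least one edge. -/
def IsSourceFree (G : FinGraph) : Prop := ∀ v : G.V, ∃ e : G.E, G.r e = v

/-- The graph with `k` vertices and no edges. -/
def discrete (k : ℕ) : FinGraph where
  V := Fin k
  E := Empty
  s := Empty.elim
  r := Empty.elim

/-- The straight line graph `A_n` with `n` vertices `v_0, …, v_{n-1}` and
edges `v_{i+1} → v_i` for `0 ≤ i ≤ n-2`. -/
def line (n : ℕ) : FinGraph where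
  V := Fin n
  E := Fin (n - 1)
  s := fun i => ⟨i.1 + 1, by have := i.isLt; omega⟩
  r := fun i => ⟨i.1, by have := i.isLt; omega⟩

/-- Disjoint union of two graphs. -/
def disjUnion (G H : FinGraph) : FinGraph where
  V := G.V ⊕ H.V
  E := G.E ⊕ H.E
  s := Sum.map G.s H.s
  r := Sum.map G.r H.r

/-- The restriction graph of `G` to a hereditary set `T` of vertices. -/
def restrict (G : FinGraph) (T : Finset G.V) (hT : G.Hereditary T) : FinGraph where
  V := {v : G.V // v ∈ T}
  E := {e : G.E // G.s e ∈ T}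
  s := fun e => ⟨G.s e.1, e.2⟩
  r := fun e => ⟨G.r e.1, hT e.1 e.2⟩

/-- The "strands of hair" extension `F⁺(n)` of `F`:  at each vertex `v` a strand
`v^{n v - 1} → ⋯ → v^1 → v` of length `n v - 1` is attached. -/
def hairExtension (F : FinGraph) (n : F.V → ℕ) : FinGraph where
  V := F.V ⊕ (Σ v : F.V, Fin (n v - 1))
  E := F.E ⊕ (Σ v : F.V, Fin (n v - 1))
  s := Sum.elim (fun e => Sum.inl (F.s e)) (fun p => Sum.inr p)
  r := Sum.elim (fun e => Sum.inl (F.r e))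
    (fun p => if h : (p.2 : ℕ) = 0 then Sum.inl p.1
      else Sum.inr ⟨p.1, ⟨(p.2 : ℕ) - 1, by have := p.2.isLt; omega⟩⟩)

/-- The "Move (R)" graph at a vertex `w` which emits precisely one edge `f`
which is not a loop: `w` is removed, and each edge `e` into `w` is replaced by
an edge `[ef]` from `s e` to `r f`. -/
def moveR (E : FinGraph) (w : E.V) (f : E.E)
    (hsf : E.s f = w) (huniq : ∀ e : E.E, E.s e = w → e = f) (hnl : E.r f ≠ w) : FinGraph where
  V := {v : E.V // v ≠ w}
  E := {e : E.E // E.r e ≠ w ∧ e ≠ f} ⊕ {e : E.E // E.r e = w}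
  s := Sum.elim
    (fun e => ⟨E.s e.1, fun h => e.2.2 (huniq e.1 h)⟩)
    (fun e => ⟨E.s e.1, fun h => hnl ((huniq e.1 h) ▸ e.2)⟩)
  r := Sum.elim
    (fun e => ⟨E.r e.1, e.2.1⟩)
    (fun _ => ⟨E.r f, hnl⟩)

/-- The collapse of `E` at a vertex `v` which is not the base of a loop:
`v` is removed, and for every `e ∈ r⁻¹(v)` and `f ∈ s⁻¹(v)` an edge `[ef]`
from `s e` to `r f` is added. -/
def collapse (E : FinGraph) (v : E.V)
    (hnl : ∀ e : E.E, E.s e = v → E.r e ≠ v) : FinGraph where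
  V := {u : E.V // u ≠ v}
  E := {e : E.E // E.r e ≠ v ∧ E.s e ≠ v} ⊕ ({e : E.E // E.r e = v} × {f : E.E // E.s f = v})
  s := Sum.elim
    (fun e => ⟨E.s e.1, e.2.2⟩)
    (fun p => ⟨E.s p.1.1, fun h => (hnl p.1.1 h) p.1.2⟩)
  r := Sum.elim
    (fun e => ⟨E.r e.1, e.2.1⟩)
    (fun p => ⟨E.r p.2.1, hnl p.2.1 p.2.2⟩)

/-- The in-split graph of `E` at a vertex `v`, with respect to a partition of
`r⁻¹(v)` into `n` classes (encoded as a surjection `P : r⁻¹(v) → Fin n`). -/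
def inSplit (E : FinGraph) (v : E.V) (n : ℕ) (P : {e : E.E // E.r e = v} → Fin n) : FinGraph where
  V := {u : E.V // u ≠ v} ⊕ Fin n
  E := ({e : E.E // E.s e = v} × Fin n) ⊕ {f : E.E // E.s f ≠ v}
  s := Sum.elim (fun x => Sum.inr x.2) (fun f => Sum.inl ⟨E.s f.1, f.2⟩)
  r := Sum.elim
    (fun x => if h : E.r x.1.1 = v then Sum.inr (P ⟨x.1.1, h⟩) else Sum.inl ⟨E.r x.1.1, h⟩)
    (fun f => if h : E.r f.1 = v then Sum.inr (P ⟨f.1, h⟩) else Sum.inl ⟨E.r f.1, h⟩)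

/-- The out-split graph of `E` at a vertex `v`, with respect to a partition of
`s⁻¹(v)` into `n` classes (encoded as a surjection `P : s⁻¹(v) → Fin n`). -/
def outSplit (E : FinGraph) (v : E.V) (n : ℕ) (P : {e : E.E // E.s e = v} → Fin n) : FinGraph where
  V := {u : E.V // u ≠ v} ⊕ Fin n
  E := ({e : E.E // E.r e = v} × Fin n) ⊕ {f : E.E // E.r f ≠ v}
  r := Sum.elim (fun x => Sum.inr x.2) (fun f => Sum.inl ⟨E.r f.1, f.2⟩)
  s := Sum.elim
    (fun x => if h : E.s x.1.1 = v then Sum.inr (P ⟨x.1.1, h⟩) else Sum.inl ⟨E.s x.1.1, h⟩)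
    (fun f => if h : E.s f.1 = v then Sum.inr (P ⟨f.1, h⟩) else Sum.inl ⟨E.s f.1, h⟩)

/-- The source elimination graph `E \ v` at a source `v`. -/
def sourceElim (E : FinGraph) (v : E.V) (hsrc : E.IsSource v) : FinGraph where
  V := {u : E.V // u ≠ v}
  E := {e : E.E // E.s e ≠ v}
  s := fun e => ⟨E.s e.1, e.2⟩
  r := fun e => ⟨E.r e.1, fun h => hsrc e.1 h⟩

/-- A chain of source eliminations starting at `E`. -/
inductive ElimChain (E : FinGraph) : FinGraph → Type 1
  | refl : ElimChain E E
  | step {H : FinGraph} (c : ElimChain E H) (v : H.V) (hsrc : H.IsSource v) :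
      ElimChain E (H.sourceElim v hsrc)

/-- The canonical (injective) map from the vertices of the final graph of a
source elimination chain back into the vertices of the initial graph. -/
def ElimChain.vmap {E : FinGraph} : {F : FinGraph} → ElimChain E F → F.V → E.V
  | _, .refl, u => u
  | _, .step c _ _, u => c.vmap u.1

/-- A chain of collapses, each performed at a regular vertex which is not the
base of a loop. -/
inductive CollapseChain (E : FinGraph) : FinGraph → Prop
  | refl : CollapseChain E E
  | step {H : FinGraph} (c : CollapseChain E H) (v : H.V) (hreg : H.IsRegular v)
      (hnl : ∀ e : H.E, H.s e = v → H.r e ≠ v) :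
      CollapseChain E (H.collapse v hnl)

end FinGraph

/-! ## Leavitt path algebras -/

/-- Generators of the Leavitt path algebra: vertices, edges, and ghost edges. -/
inductive LPAGen (G : FinGraph) : Type
  | vert : G.V → LPAGen G
  | edge : G.E → LPAGen G
  | ghost : G.E → LPAGen G

/-- The defining relations of the Leavitt path algebra of a finite graph. -/
inductive LeavittRel (K : Type) [Field K] (G : FinGraph) :
    FreeAlgebra K (LPAGen G) → FreeAlgebra K (LPAGen G) → Prop
  | vertMul (v w : G.V) :
      LeavittRel K G (FreeAlgebra.ι K (LPAGen.vert v) * FreeAlgebra.ι K (LPAGen.vert w))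
        (if v = w then FreeAlgebra.ι K (LPAGen.vert v) else 0)
  | edgeLeft (e : G.E) :
      LeavittRel K G (FreeAlgebra.ι K (LPAGen.vert (G.s e)) * FreeAlgebra.ι K (LPAGen.edge e))
        (FreeAlgebra.ι K (LPAGen.edge e))
  | edgeRight (e : G.E) :
      LeavittRel K G (FreeAlgebra.ι K (LPAGen.edge e) * FreeAlgebra.ι K (LPAGen.vert (G.r e)))
        (FreeAlgebra.ι K (LPAGen.edge e))
  | ghostLeft (e : G.E) :
      LeavittRel K G (FreeAlgebra.ι K (LPAGen.vert (G.r e)) * FreeAlgebra.ι K (LPAGen.ghost e))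
        (FreeAlgebra.ι K (LPAGen.ghost e))
  | ghostRight (e : G.E) :
      LeavittRel K G (FreeAlgebra.ι K (LPAGen.ghost e) * FreeAlgebra.ι K (LPAGen.vert (G.s e)))
        (FreeAlgebra.ι K (LPAGen.ghost e))
  | ghostEdge (e f : G.E) :
      LeavittRel K G (FreeAlgebra.ι K (LPAGen.ghost e) * FreeAlgebra.ι K (LPAGen.edge f))
        (if e = f then FreeAlgebra.ι K (LPAGen.vert (G.r e)) else 0)
  | cuntzKrieger (v : G.V) (hv : G.IsRegular v) :
      LeavittRel K G (FreeAlgebra.ι K (LPAGen.vert v))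
        (∑ e ∈ Finset.univ.filter (fun e : G.E => G.s e = v),
          FreeAlgebra.ι K (LPAGen.edge e) * FreeAlgebra.ι K (LPAGen.ghost e))
  | unit :
      LeavittRel K G 1 (∑ v : G.V, FreeAlgebra.ι K (LPAGen.vert v))

/-- The Leavitt path algebra `L_K(G)` of a finite graph `G` with coefficients in
a field `K`. -/
abbrev LeavittPathAlgebra (K : Type) [Field K] (G : FinGraph) : Type :=
  RingQuot (LeavittRel K G)

namespace LeavittPathAlgebra

variable (K : Type) [Field K] (G : FinGraph)

/-- The image of a vertex in the Leavitt path algebra. -/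
def vert (v : G.V) : LeavittPathAlgebra K G :=
  RingQuot.mkAlgHom K (LeavittRel K G) (FreeAlgebra.ι K (LPAGen.vert v))

/-- The image of an edge in the Leavitt path algebra. -/
def edge (e : G.E) : LeavittPathAlgebra K G :=
  RingQuot.mkAlgHom K (LeavittRel K G) (FreeAlgebra.ι K (LPAGen.edge e))

/-- The image of a ghost edge in the Leavitt path algebra. -/
def ghost (e : G.E) : LeavittPathAlgebra K G :=
  RingQuot.mkAlgHom K (LeavittRel K G) (FreeAlgebra.ι K (LPAGen.ghost e))

end LeavittPathAlgebra

/-! ## Ring-theoretic notions -/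

/-- Two unital rings are Morita equivalent if their categories of left modules
are equivalent. -/
def MoritaEquivalent (R S : Type) [Ring R] [Ring S] : Prop :=
  Nonempty (ModuleCat.{0} R ≌ ModuleCat.{0} S)

/-- An idempotent `e` of a ring `R` is full if `R e R = R`, i.e. `1` is a finite
sum of elements of the form `a * e * b`. -/
def IsFullIdempotent {R : Type} [Ring R] (e : R) : Prop :=
  IsIdempotentElem e ∧ ∃ (n : ℕ) (a b : Fin n → R), (∑ i, a i * e * b i) = 1

/-- `S` is isomorphic, as a (nonunital) `K`-algebra, to the corner ring
`ε R ε = {x : R | ε * x * ε = x}` of `R`. -/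
def IsCornerIso (K : Type) [Field K] (S R : Type) [Ring S] [Ring R]
    [Algebra K S] [Algebra K R] (ε : R) : Prop :=
  ∃ φ : S →ₙₐ[K] R, Function.Injective φ ∧ Set.range φ = {x : R | ε * x * ε = x}

/-- A module `Q` is a generator for the category of left `R`-modules iff `R` is
an epimorphic image (equivalently, a direct summand) of a finite direct sum of
copies of `Q`. -/
def IsGenerator (R Q : Type) [Ring R] [AddCommGroup Q] [Module R Q] : Prop :=
  ∃ (n : ℕ) (f : (Fin n → Q) →ₗ[R] R), Function.Surjective f

open CategoryTheory
open scoped ModuleCat.Algebra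

/-! ### Relations between the generators of a Leavitt path algebra -/

section Generators

variable (K : Type) [Field K] (G : FinGraph)

namespace LeavittPathAlgebra

lemma vert_mul_vert (v w : G.V) :
    vert K G v * vert K G w = if v = w then vert K G v else 0 := by
  have h := RingQuot.mkAlgHom_rel K (LeavittRel.vertMul (K := K) v w)
  rw [map_mul] at h
  refine h.trans ?_
  split_ifs <;> simp [vert]

lemma vert_mul_edge_self (e : G.E) : vert K G (G.s e) * edge K G e = edge K G e := by
  have h := RingQuot.mkAlgHom_rel K (LeavittRel.edgeLeft (K := K) e)
  rwa [map_mul] at h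

lemma edge_mul_vert_self (e : G.E) : edge K G e * vert K G (G.r e) = edge K G e := by
  have h := RingQuot.mkAlgHom_rel K (LeavittRel.edgeRight (K := K) e)
  rwa [map_mul] at h

lemma vert_mul_ghost_self (e : G.E) : vert K G (G.r e) * ghost K G e = ghost K G e := by
  have h := RingQuot.mkAlgHom_rel K (LeavittRel.ghostLeft (K := K) e)
  rwa [map_mul] at h

lemma ghost_mul_vert_self (e : G.E) : ghost K G e * vert K G (G.s e) = ghost K G e := by
  have h := RingQuot.mkAlgHom_rel K (LeavittRel.ghostRight (K := K) e)
  rwa [map_mul] at h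

lemma ghost_mul_edge (e f : G.E) :
    ghost K G e * edge K G f = if e = f then vert K G (G.r e) else 0 := by
  have h := RingQuot.mkAlgHom_rel K (LeavittRel.ghostEdge (K := K) e f)
  rw [map_mul] at h
  refine h.trans ?_
  split_ifs <;> simp [vert]

lemma vert_eq_sum (v : G.V) (hv : G.IsRegular v) :
    vert K G v = ∑ e ∈ Finset.univ.filter (fun e : G.E => G.s e = v),
      edge K G e * ghost K G e := by
  have h := RingQuot.mkAlgHom_rel K (LeavittRel.cuntzKrieger (K := K) v hv)
  rw [map_sum] at h
  simp only [map_mul] at h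
  exact h

lemma one_eq_sum : (1 : LeavittPathAlgebra K G) = ∑ v : G.V, vert K G v := by
  have h := RingQuot.mkAlgHom_rel K (LeavittRel.unit (K := K) (G := G))
  rw [map_sum, map_one] at h
  exact h

variable {K G}

/-- The rule for a product of a vertex and an edge, including the orthogonal case. -/
lemma vert_mul_edge (v : G.V) (e : G.E) :
    vert K G v * edge K G e = if v = G.s e then edge K G e else 0 := by
  rw [← vert_mul_edge_self, ← mul_assoc, vert_mul_vert]
  split_ifs with h
  · rw [h]
  · simp

lemma edge_mul_vert (v : G.V) (e : G.E) :
    edge K G e * vert K G v = if G.r e = v then edge K G e else 0 := by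
  rw [← edge_mul_vert_self, mul_assoc, vert_mul_vert]
  split_ifs with h <;> simp

lemma vert_mul_ghost (v : G.V) (e : G.E) :
    vert K G v * ghost K G e = if v = G.r e then ghost K G e else 0 := by
  rw [← vert_mul_ghost_self, ← mul_assoc, vert_mul_vert]
  split_ifs with h
  · rw [h]
  · simp

lemma ghost_mul_vert (v : G.V) (e : G.E) :
    ghost K G e * vert K G v = if G.s e = v then ghost K G e else 0 := by
  rw [← ghost_mul_vert_self, mul_assoc, vert_mul_vert]
  split_ifs with h <;> simp

lemma edge_mul_edge_of_ne {e e' : G.E} (h : G.r e ≠ G.s e') :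
    edge K G e * edge K G e' = 0 := by
  rw [← vert_mul_edge_self K G e', ← mul_assoc, edge_mul_vert, if_neg h, zero_mul]

lemma ghost_mul_ghost_of_ne {e e' : G.E} (h : G.s e ≠ G.r e') :
    ghost K G e * ghost K G e' = 0 := by
  rw [← vert_mul_ghost_self K G e', ← mul_assoc, ghost_mul_vert, if_neg h, zero_mul]

/-- A `K`-linear map between `L_K(G)`-modules that commutes with the generators is
`L_K(G)`-linear. -/
lemma map_smul_of_generators {M N : Type*} [AddCommGroup M] [AddCommGroup N]
    [Module K M] [Module K N]
    [Module (LeavittPathAlgebra K G) M] [Module (LeavittPathAlgebra K G) N]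
    [IsScalarTower K (LeavittPathAlgebra K G) M] [IsScalarTower K (LeavittPathAlgebra K G) N]
    (φ : M →ₗ[K] N)
    (hv : ∀ v m, φ (vert K G v • m) = vert K G v • φ m)
    (he : ∀ e m, φ (edge K G e • m) = edge K G e • φ m)
    (hg : ∀ e m, φ (ghost K G e • m) = ghost K G e • φ m)
    (a : LeavittPathAlgebra K G) (m : M) : φ (a • m) = a • φ m := by
  obtain ⟨a, rfl⟩ := RingQuot.mkAlgHom_surjective K (LeavittRel K G) a
  induction a using FreeAlgebra.induction generalizing m with
  | grade0 k => simp only [AlgHom.commutes, algebraMap_smul, map_smul]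
  | grade1 x => cases x with
    | vert v => exact hv v m
    | edge e => exact he e m
    | ghost e => exact hg e m
  | mul a b ha hb => simp only [map_mul, mul_smul, ha, hb]
  | add a b ha hb => simp only [map_add, add_smul, ha, hb]

end LeavittPathAlgebra

end Generators

/-! ### Leavitt families and the modules they cut out -/

section Family

/-- A Leavitt `G`-family in a ring `A`: elements satisfying the defining relations of
`L_K(G)`, except that the vertices are not required to sum to `1`. -/
structure LeavittFamily (G : FinGraph) (A : Type) [Ring A] where
  vert : G.V → A
  edge : G.E → A
  ghost : G.E → A
  vert_mul_vert : ∀ v w, vert v * vert w = if v = w then vert v else 0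
  vert_mul_edge : ∀ e, vert (G.s e) * edge e = edge e
  edge_mul_vert : ∀ e, edge e * vert (G.r e) = edge e
  vert_mul_ghost : ∀ e, vert (G.r e) * ghost e = ghost e
  ghost_mul_vert : ∀ e, ghost e * vert (G.s e) = ghost e
  ghost_mul_edge : ∀ e f, ghost e * edge f = if e = f then vert (G.r e) else 0
  vert_eq_sum : ∀ v, G.IsRegular v →
    vert v = ∑ e ∈ Finset.univ.filter (fun e : G.E => G.s e = v), edge e * ghost e

namespace LeavittFamily

variable {K : Type} [Field K] {G : FinGraph} {A : Type} [Ring A] [Algebra K A]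
  (F : LeavittFamily G A)

/-- The idempotent of the family: the sum of all vertices. -/
def unit : A := ∑ v, F.vert v

lemma unit_mul_vert (v : G.V) : F.unit * F.vert v = F.vert v := by
  simp [unit, Finset.sum_mul, F.vert_mul_vert]

lemma unit_mul_edge (e : G.E) : F.unit * F.edge e = F.edge e := by
  rw [← F.vert_mul_edge, ← mul_assoc, unit_mul_vert]

lemma unit_mul_ghost (e : G.E) : F.unit * F.ghost e = F.ghost e := by
  rw [← F.vert_mul_ghost, ← mul_assoc, unit_mul_vert]

lemma unit_mul_unit : F.unit * F.unit = F.unit := by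
  conv_lhs => enter [2]; rw [unit]
  rw [Finset.mul_sum]
  simp only [unit_mul_vert]
  rfl

variable (K) in
/-- The subspace `pM` of an `A`-module `M` cut out by the idempotent `p` of the family. -/
def cutSubmodule (M : Type) [AddCommGroup M] [Module K M] [Module A M] [IsScalarTower K A M] :
    Submodule K M :=
  LinearMap.eqLocus (Algebra.lsmul K K M F.unit) LinearMap.id

variable (K) in
/-- The subspace `pM`, as a type that will carry the `L_K(G)`-module structure coming from the
family. -/
def Cut (M : Type) [AddCommGroup M] [Module K M] [Module A M] [IsScalarTower K A M] : Type :=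
  F.cutSubmodule K M

variable {M : Type} [AddCommGroup M] [Module K M] [Module A M] [IsScalarTower K A M]

namespace Cut

instance : AddCommGroup (F.Cut K M) := inferInstanceAs (AddCommGroup (F.cutSubmodule K M))

instance : Module K (F.Cut K M) := inferInstanceAs (Module K (F.cutSubmodule K M))

/-- The inclusion `pM → M`. -/
def incl : F.Cut K M →ₗ[K] M := (F.cutSubmodule K M).subtype

lemma incl_injective : Function.Injective (incl F : F.Cut K M → M) := Subtype.val_injective

lemma unit_smul_incl (m : F.Cut K M) : F.unit • incl F m = incl F m := m.2

/-- Multiplication by `p a`, as an endomorphism of `pM`. -/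
def act (a : A) : Module.End K (F.Cut K M) :=
  LinearMap.codRestrict (F.cutSubmodule K M) (Algebra.lsmul K K M (F.unit * a) ∘ₗ incl F) (by
    intro m
    change F.unit • (F.unit * a) • incl F m = (F.unit * a) • incl F m
    rw [smul_smul, ← mul_assoc, F.unit_mul_unit])

lemma incl_act (a : A) (ha : F.unit * a = a) (m : F.Cut K M) :
    incl F (act F a m) = a • incl F m := by
  change (F.unit * a) • incl F m = _
  rw [ha]

/-- The representation of `L_K(G)` on `pM` induced by the family. -/
noncomputable def rep : LeavittPathAlgebra K G →ₐ[K] Module.End K (F.Cut K M) :=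
  RingQuot.liftAlgHom K ⟨FreeAlgebra.lift K (fun x => match x with
    | .vert v => act F (F.vert v)
    | .edge e => act F (F.edge e)
    | .ghost e => act F (F.ghost e)), by
    have hv := fun v => incl_act F (M := M) (K := K) _ (F.unit_mul_vert v)
    have he := fun e => incl_act F (M := M) (K := K) _ (F.unit_mul_edge e)
    have hg := fun e => incl_act F (M := M) (K := K) _ (F.unit_mul_ghost e)
    intro x y h
    refine LinearMap.ext fun m => incl_injective F ?_
    cases h with
    | vertMul v w =>
      simp only [map_mul, FreeAlgebra.lift_ι_apply, Module.End.mul_apply, hv, smul_smul,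
        F.vert_mul_vert]
      split_ifs <;> simp [hv]
    | edgeLeft e =>
      simp only [map_mul, FreeAlgebra.lift_ι_apply, Module.End.mul_apply, hv, he, smul_smul,
        F.vert_mul_edge]
    | edgeRight e =>
      simp only [map_mul, FreeAlgebra.lift_ι_apply, Module.End.mul_apply, hv, he, smul_smul,
        F.edge_mul_vert]
    | ghostLeft e =>
      simp only [map_mul, FreeAlgebra.lift_ι_apply, Module.End.mul_apply, hv, hg, smul_smul,
        F.vert_mul_ghost]
    | ghostRight e =>
      simp only [map_mul, FreeAlgebra.lift_ι_apply, Module.End.mul_apply, hv, hg, smul_smul,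
        F.ghost_mul_vert]
    | ghostEdge e f =>
      simp only [map_mul, FreeAlgebra.lift_ι_apply, Module.End.mul_apply, he, hg, smul_smul,
        F.ghost_mul_edge]
      split_ifs <;> simp [hv]
    | cuntzKrieger v h =>
      simp only [map_mul, map_sum, FreeAlgebra.lift_ι_apply, Module.End.mul_apply, hv, he, hg,
        smul_smul, LinearMap.sum_apply]
      rw [F.vert_eq_sum v h, Finset.sum_smul]
    | unit =>
      simp only [map_one, map_sum, FreeAlgebra.lift_ι_apply, Module.End.one_apply, hv,
        LinearMap.sum_apply, ← Finset.sum_smul]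
      exact (unit_smul_incl F m).symm⟩

noncomputable instance : Module (LeavittPathAlgebra K G) (F.Cut K M) :=
  Module.compHom _ (rep F : LeavittPathAlgebra K G →ₐ[K] Module.End K (F.Cut K M)).toRingHom

instance : IsScalarTower K (LeavittPathAlgebra K G) (F.Cut K M) where
  smul_assoc k a m := by
    change rep F (k • a) m = k • rep F a m
    rw [map_smul, LinearMap.smul_apply]

lemma incl_vert_smul (v : G.V) (m : F.Cut K M) :
    incl F (LeavittPathAlgebra.vert K G v • m) = F.vert v • incl F m := by
  rw [← incl_act F _ (F.unit_mul_vert v)]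
  change incl F (rep F (LeavittPathAlgebra.vert K G v) m) = _
  simp [rep, LeavittPathAlgebra.vert]

lemma incl_edge_smul (e : G.E) (m : F.Cut K M) :
    incl F (LeavittPathAlgebra.edge K G e • m) = F.edge e • incl F m := by
  rw [← incl_act F _ (F.unit_mul_edge e)]
  change incl F (rep F (LeavittPathAlgebra.edge K G e) m) = _
  simp [rep, LeavittPathAlgebra.edge]

lemma incl_ghost_smul (e : G.E) (m : F.Cut K M) :
    incl F (LeavittPathAlgebra.ghost K G e • m) = F.ghost e • incl F m := by
  rw [← incl_act F _ (F.unit_mul_ghost e)]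
  change incl F (rep F (LeavittPathAlgebra.ghost K G e) m) = _
  simp [rep, LeavittPathAlgebra.ghost]

/-- An element of `M` fixed by `p`, as an element of `pM`. -/
def mk (m : M) (hm : F.unit • m = m) : F.Cut K M := ⟨m, hm⟩

@[simp] lemma incl_mk (m : M) (hm : F.unit • m = m) : incl F (mk F m hm : F.Cut K M) = m := rfl

/-- The projection `m ↦ p m` of `M` onto `pM`. -/
def proj : M →ₗ[K] F.Cut K M :=
  LinearMap.codRestrict (F.cutSubmodule K M) (Algebra.lsmul K K M F.unit) (by
    intro m
    change F.unit • F.unit • m = F.unit • m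
    rw [smul_smul, F.unit_mul_unit])

@[simp] lemma incl_proj (m : M) : incl F (proj F m : F.Cut K M) = F.unit • m := rfl

variable {Q : Type} [AddCommGroup Q] [Module K Q] [Module A Q] [IsScalarTower K A Q]

/-- Functoriality of `M ↦ pM`. -/
def map (φ : M →ₗ[A] Q) : F.Cut K M →ₗ[LeavittPathAlgebra K G] F.Cut K Q :=
  let ψ : F.Cut K M →ₗ[K] F.Cut K Q :=
    LinearMap.codRestrict (F.cutSubmodule K Q) ((φ.restrictScalars K) ∘ₗ incl F) (by
      intro m
      change F.unit • φ (incl F m) = φ (incl F m)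
      rw [← map_smul, unit_smul_incl])
  have hψ : ∀ m, incl F (ψ m) = φ (incl F m) := fun _ => rfl
  { ψ with
    map_smul' := LeavittPathAlgebra.map_smul_of_generators ψ
      (fun v m => incl_injective F (by simp only [hψ, incl_vert_smul, map_smul]))
      (fun v m => incl_injective F (by simp only [hψ, incl_edge_smul, map_smul]))
      (fun v m => incl_injective F (by simp only [hψ, incl_ghost_smul, map_smul])) }

@[simp] lemma incl_map (φ : M →ₗ[A] Q) (m : F.Cut K M) :
    incl F (map F φ m) = φ (incl F m) := rfl

end Cut

variable (K) in
/-- The functor `M ↦ pM` from `A`-modules to `L_K(G)`-modules. -/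
noncomputable def cutFunctor : ModuleCat.{0} A ⥤ ModuleCat.{0} (LeavittPathAlgebra K G) where
  obj M := ModuleCat.of _ (F.Cut K M)
  map φ := ModuleCat.ofHom (Cut.map F φ.hom)
  map_id _ := rfl
  map_comp _ _ := rfl

end LeavittFamily

end Family

/-! ### The Move (R) family in `L_K(E)` -/

section MoveR

open LeavittPathAlgebra

variable (K : Type) [Field K] (E : FinGraph) (w : E.V) (f : E.E)
    (hsf : E.s f = w) (huniq : ∀ e : E.E, E.s e = w → e = f) (hnl : E.r f ≠ w)

namespace MoveR

/-- Summing over the edges of `E` emitted by a vertex `v ≠ w` is the same as summing over the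
edges of the Move (R) graph emitted by `v`, where `[ef]` corresponds to `e`. -/
lemma sum_edges {A : Type} [AddCommMonoid A] (v : (E.moveR w f hsf huniq hnl).V) (φ : E.E → A) :
    ∑ e ∈ Finset.univ.filter (fun e : E.E => E.s e = v.1), φ e =
    ∑ g ∈ Finset.univ.filter
      (fun g : (E.moveR w f hsf huniq hnl).E => (E.moveR w f hsf huniq hnl).s g = v),
      φ (Sum.elim Subtype.val Subtype.val g) := by
  symm
  refine Finset.sum_bij (fun g _ => Sum.elim Subtype.val Subtype.val g) ?_ ?_ ?_ ?_
  · rintro (g | g) hg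
    · exact Finset.mem_filter.2
        ⟨Finset.mem_univ _, congrArg Subtype.val (Finset.mem_filter.1 hg).2⟩
    · exact Finset.mem_filter.2
        ⟨Finset.mem_univ _, congrArg Subtype.val (Finset.mem_filter.1 hg).2⟩
  · rintro (g | g) _ (g' | g') _ h
    · exact congrArg Sum.inl (Subtype.ext h)
    · exact absurd ((congrArg E.r (show g.1 = g'.1 from h)).trans g'.2) g.2.1
    · exact absurd ((congrArg E.r (show g.1 = g'.1 from h)).symm.trans g.2) g'.2.1
    · exact congrArg Sum.inr (Subtype.ext h)
  · intro e he
    have hs : E.s e = v.1 := by simpa using he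
    have hef : e ≠ f := by
      rintro rfl
      exact v.2 (hs.symm.trans hsf)
    by_cases hr : E.r e = w
    · exact ⟨Sum.inr ⟨e, hr⟩,
        Finset.mem_filter.2 ⟨Finset.mem_univ _, Subtype.ext hs⟩, rfl⟩
    · exact ⟨Sum.inl ⟨e, hr, hef⟩,
        Finset.mem_filter.2 ⟨Finset.mem_univ _, Subtype.ext hs⟩, rfl⟩
  · intro _ _
    rfl

lemma isRegular_iff (v : (E.moveR w f hsf huniq hnl).V) :
    (E.moveR w f hsf huniq hnl).IsRegular v ↔ E.IsRegular v.1 := by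
  constructor
  · rintro ⟨(g | g), hg⟩
    · exact ⟨g.1, congrArg Subtype.val hg⟩
    · exact ⟨g.1, congrArg Subtype.val hg⟩
  · rintro ⟨e, hs⟩
    have hef : e ≠ f := by
      rintro rfl
      exact v.2 (hs.symm.trans hsf)
    by_cases hr : E.r e = w
    · exact ⟨Sum.inr ⟨e, hr⟩, Subtype.ext hs⟩
    · exact ⟨Sum.inl ⟨e, hr, hef⟩, Subtype.ext hs⟩

/-- Since `w` emits only `f`, the Cuntz-Krieger relation at `w` reads `w = f f*`. -/
lemma edge_mul_ghost_self (hsf : E.s f = w) (huniq : ∀ e : E.E, E.s e = w → e = f) :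
    edge K E f * ghost K E f = vert K E w := by
  rw [vert_eq_sum K E w ⟨f, hsf⟩]
  have : Finset.univ.filter (fun e : E.E => E.s e = w) = {f} := by
    ext e
    simp only [Finset.mem_filter, Finset.mem_univ, true_and, Finset.mem_singleton]
    exact ⟨huniq e, fun h => h ▸ hsf⟩
  rw [this, Finset.sum_singleton]

/-- The family of the Move (R) graph inside `L_K(E)`: vertices and old edges are sent to
themselves, and `[ef]` to the path `ef`. -/
noncomputable def down : LeavittFamily (E.moveR w f hsf huniq hnl) (LeavittPathAlgebra K E) where
  vert v := vert K E v.1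
  edge := Sum.elim (fun e => edge K E e.1) (fun e => edge K E e.1 * edge K E f)
  ghost := Sum.elim (fun e => ghost K E e.1) (fun e => ghost K E f * ghost K E e.1)
  vert_mul_vert v v' := by
    rw [LeavittPathAlgebra.vert_mul_vert]
    exact if_congr Subtype.ext_iff.symm rfl rfl
  vert_mul_edge := by
    rintro (e | e)
    · exact vert_mul_edge_self K E e.1
    · change vert K E (E.s e.1) * (edge K E e.1 * edge K E f) = edge K E e.1 * edge K E f
      rw [← mul_assoc, vert_mul_edge_self]
  edge_mul_vert := by
    rintro (e | e)
    · exact edge_mul_vert_self K E e.1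
    · change (edge K E e.1 * edge K E f) * vert K E (E.r f) = edge K E e.1 * edge K E f
      rw [mul_assoc, edge_mul_vert_self]
  vert_mul_ghost := by
    rintro (e | e)
    · exact vert_mul_ghost_self K E e.1
    · change vert K E (E.r f) * (ghost K E f * ghost K E e.1) = ghost K E f * ghost K E e.1
      rw [← mul_assoc, vert_mul_ghost_self]
  ghost_mul_vert := by
    rintro (e | e)
    · exact ghost_mul_vert_self K E e.1
    · change (ghost K E f * ghost K E e.1) * vert K E (E.s e.1) = ghost K E f * ghost K E e.1
      rw [mul_assoc, ghost_mul_vert_self]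
  ghost_mul_edge g g' := by
    by_cases hgg : g = g'
    · subst hgg
      rw [if_pos rfl]
      rcases g with e | e
      · exact (LeavittPathAlgebra.ghost_mul_edge K E e.1 e.1).trans (if_pos rfl)
      · change (ghost K E f * ghost K E e.1) * (edge K E e.1 * edge K E f) = vert K E (E.r f)
        rw [mul_assoc, ← mul_assoc (ghost K E e.1), LeavittPathAlgebra.ghost_mul_edge,
          if_pos rfl, e.2, ← hsf, vert_mul_edge_self, LeavittPathAlgebra.ghost_mul_edge,
          if_pos rfl]
    · rw [if_neg hgg]
      rcases g with e | e <;> rcases g' with e' | e'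
      · exact (LeavittPathAlgebra.ghost_mul_edge K E e.1 e'.1).trans
          (if_neg fun h => hgg (congrArg Sum.inl (Subtype.ext h)))
      · change ghost K E e.1 * (edge K E e'.1 * edge K E f) = 0
        have h : e.1 ≠ e'.1 := fun h => e.2.1 (h ▸ e'.2)
        rw [← mul_assoc, LeavittPathAlgebra.ghost_mul_edge, if_neg h, zero_mul]
      · change (ghost K E f * ghost K E e.1) * edge K E e'.1 = 0
        have h : e.1 ≠ e'.1 := fun h => e'.2.1 (h ▸ e.2)
        rw [mul_assoc, LeavittPathAlgebra.ghost_mul_edge, if_neg h, mul_zero]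
      · change (ghost K E f * ghost K E e.1) * (edge K E e'.1 * edge K E f) = 0
        rw [mul_assoc, ← mul_assoc (ghost K E e.1), LeavittPathAlgebra.ghost_mul_edge,
          if_neg fun h => hgg (congrArg Sum.inr (Subtype.ext h)), zero_mul, mul_zero]
  vert_eq_sum v hv := by
    rw [vert_eq_sum K E v.1 ((isRegular_iff E w f hsf huniq hnl v).1 hv),
      sum_edges E w f hsf huniq hnl v]
    refine Finset.sum_congr rfl ?_
    rintro (e | e) _
    · rfl
    · change edge K E e.1 * ghost K E e.1 =
        (edge K E e.1 * edge K E f) * (ghost K E f * ghost K E e.1)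
      rw [mul_assoc, ← mul_assoc (edge K E f), edge_mul_ghost_self K E w f hsf huniq,
        ← mul_assoc, LeavittPathAlgebra.edge_mul_vert, if_pos e.2]

/-- The idempotent of the family `down` is `1 - w`. -/
lemma down_unit : (down K E w f hsf huniq hnl).unit = 1 - vert K E w := by
  rw [one_eq_sum, Fintype.sum_eq_add_sum_subtype_ne _ w, add_sub_cancel_left]
  rfl

/-! ### Operators on `N × N` given by `2 × 2` matrices -/

/-- The `2 × 2` matrix `(a b; c d)` over `L`, acting on column vectors in `N × N`. -/
def op {L : Type} [Ring L] [Algebra K L] (N : Type) [AddCommGroup N] [Module K N] [Module L N]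
    [IsScalarTower K L N] (a b c d : L) : Module.End K (N × N) :=
  LinearMap.prod
    (Algebra.lsmul K K N a ∘ₗ LinearMap.fst K N N + Algebra.lsmul K K N b ∘ₗ LinearMap.snd K N N)
    (Algebra.lsmul K K N c ∘ₗ LinearMap.fst K N N + Algebra.lsmul K K N d ∘ₗ LinearMap.snd K N N)

section op

variable {L : Type} [Ring L] [Algebra K L] (N : Type) [AddCommGroup N] [Module K N] [Module L N]
    [IsScalarTower K L N]

@[simp] lemma op_apply (a b c d : L) (n : N × N) :
    op K N a b c d n = (a • n.1 + b • n.2, c • n.1 + d • n.2) := rfl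

lemma op_mul (a b c d a' b' c' d' : L) :
    op K N a b c d * op K N a' b' c' d' =
      op K N (a * a' + b * c') (a * b' + b * d') (c * a' + d * c') (c * b' + d * d') := by
  refine LinearMap.ext fun n => ?_
  simp only [Module.End.mul_apply, op_apply, smul_add, add_smul, mul_smul]
  ext <;> simp only <;> abel

lemma op_zero : op K N (0 : L) 0 0 0 = 0 := by
  refine LinearMap.ext fun n => ?_
  simp

lemma op_sum {ι : Type} (s : Finset ι) (a : ι → L) :
    ∑ i ∈ s, op K N (a i) 0 0 0 = op K N (∑ i ∈ s, a i) 0 0 0 := by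
  refine LinearMap.ext fun n => ?_
  simp [LinearMap.sum_apply, Finset.sum_smul, Prod.ext_iff, Prod.fst_sum, Prod.snd_sum]

lemma op_add (a b c d a' b' c' d' : L) :
    op K N a b c d + op K N a' b' c' d' = op K N (a + a') (b + b') (c + c') (d + d') := by
  refine LinearMap.ext fun n => ?_
  simp only [LinearMap.add_apply, op_apply, add_smul]
  ext <;> simp only [Prod.mk_add_mk] <;> abel

end op

/-! ### The `E`-family on `N × N` -/

/-- A vertex of `E` other than `w`, as a vertex of the Move (R) graph. -/
def vtx (v : E.V) (h : v ≠ w) : (E.moveR w f hsf huniq hnl).V := ⟨v, h⟩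

/-- An edge of `E` other than `f` and not ending at `w`, as an edge of the Move (R) graph. -/
def old (e : E.E) (hr : E.r e ≠ w) (he : e ≠ f) : (E.moveR w f hsf huniq hnl).E :=
  Sum.inl ⟨e, hr, he⟩

/-- The edge `[ef]` of the Move (R) graph, for `e` ending at `w`. -/
def new (e : E.E) (hr : E.r e = w) : (E.moveR w f hsf huniq hnl).E := Sum.inr ⟨e, hr⟩

section up

variable (N : Type) [AddCommGroup N] [Module K N]
  [Module (LeavittPathAlgebra K (E.moveR w f hsf huniq hnl)) N]
  [IsScalarTower K (LeavittPathAlgebra K (E.moveR w f hsf huniq hnl)) N]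

/-- The vertex `r(f)` of the Move (R) graph, as an element of its Leavitt path algebra. -/
noncomputable def rf : LeavittPathAlgebra K (E.moveR w f hsf huniq hnl) :=
  vert K _ (vtx E w f hsf huniq hnl (E.r f) hnl)

lemma rf_mul_rf :
    rf K E w f hsf huniq hnl * rf K E w f hsf huniq hnl = rf K E w f hsf huniq hnl := by
  rw [rf, LeavittPathAlgebra.vert_mul_vert, if_pos rfl]

/-- The action on `N × N` of a vertex of `E`; see `up`. -/
noncomputable def upVert (v : E.V) : Module.End K (N × N) :=
  if h : v = w then op K N 0 0 0 (rf K E w f hsf huniq hnl)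
  else op K N (vert K _ (vtx E w f hsf huniq hnl v h)) 0 0 0

/-- The action on `N × N` of an edge of `E`; see `up`. -/
noncomputable def upEdge (e : E.E) : Module.End K (N × N) :=
  if h : e = f then op K N 0 0 (rf K E w f hsf huniq hnl) 0
  else if hr : E.r e = w then op K N 0 (edge K _ (new E w f hsf huniq hnl e hr)) 0 0
  else op K N (edge K _ (old E w f hsf huniq hnl e hr h)) 0 0 0

/-- The action on `N × N` of a ghost edge of `E`; see `up`. -/
noncomputable def upGhost (e : E.E) : Module.End K (N × N) :=
  if h : e = f then op K N 0 (rf K E w f hsf huniq hnl) 0 0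
  else if hr : E.r e = w then op K N 0 0 (ghost K _ (new E w f hsf huniq hnl e hr)) 0
  else op K N (ghost K _ (old E w f hsf huniq hnl e hr h)) 0 0 0

lemma upVert_w : upVert K E w f hsf huniq hnl N w =
    op K N 0 0 0 (rf K E w f hsf huniq hnl) := dif_pos rfl

lemma upVert_ne (v : E.V) (h : v ≠ w) : upVert K E w f hsf huniq hnl N v =
    op K N (vert K _ (vtx E w f hsf huniq hnl v h)) 0 0 0 := dif_neg h

lemma upEdge_f : upEdge K E w f hsf huniq hnl N f =
    op K N 0 0 (rf K E w f hsf huniq hnl) 0 := dif_pos rfl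

lemma upEdge_new (e : E.E) (hr : E.r e = w) : upEdge K E w f hsf huniq hnl N e =
    op K N 0 (edge K _ (new E w f hsf huniq hnl e hr)) 0 0 := by
  have h : e ≠ f := fun h => hnl (h ▸ hr)
  rw [upEdge, dif_neg h, dif_pos hr]

lemma upEdge_old (e : E.E) (hr : E.r e ≠ w) (h : e ≠ f) : upEdge K E w f hsf huniq hnl N e =
    op K N (edge K _ (old E w f hsf huniq hnl e hr h)) 0 0 0 := by
  rw [upEdge, dif_neg h, dif_neg hr]

lemma upGhost_f : upGhost K E w f hsf huniq hnl N f =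
    op K N 0 (rf K E w f hsf huniq hnl) 0 0 := dif_pos rfl

lemma upGhost_new (e : E.E) (hr : E.r e = w) : upGhost K E w f hsf huniq hnl N e =
    op K N 0 0 (ghost K _ (new E w f hsf huniq hnl e hr)) 0 := by
  have h : e ≠ f := fun h => hnl (h ▸ hr)
  rw [upGhost, dif_neg h, dif_pos hr]

lemma upGhost_old (e : E.E) (hr : E.r e ≠ w) (h : e ≠ f) : upGhost K E w f hsf huniq hnl N e =
    op K N (ghost K _ (old E w f hsf huniq hnl e hr h)) 0 0 0 := by
  rw [upGhost, dif_neg h, dif_neg hr]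

/-- The trichotomy for edges of `E`: the edge `f`, the edges into `w`, and all others. -/
lemma edge_cases {P : E.E → Prop} (h₁ : P f) (h₂ : ∀ e, E.r e = w → P e)
    (h₃ : ∀ e, E.r e ≠ w → e ≠ f → P e) (e : E.E) : P e := by
  by_cases h : e = f
  · exact h ▸ h₁
  · by_cases hr : E.r e = w
    · exact h₂ e hr
    · exact h₃ e hr h

/-- The Leavitt `E`-family on `N × N`, for a module `N` over the Leavitt path algebra of the
Move (R) graph. The first coordinate carries the vertices other than `w`; the second one, cut
down to `r(f) N`, is the value at `w`, with `f` acting as the identification with the copy of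
`r(f) N` in the first coordinate. -/
noncomputable def up : LeavittFamily E (Module.End K (N × N)) where
  vert := upVert K E w f hsf huniq hnl N
  edge := upEdge K E w f hsf huniq hnl N
  ghost := upGhost K E w f hsf huniq hnl N
  vert_mul_vert v v' := by
    by_cases hv : v = w <;> by_cases hv' : v' = w
    · subst hv hv'
      simp [upVert_w, op_mul, rf_mul_rf]
    · rw [if_neg (fun h : v = v' => hv' (h ▸ hv)), hv, upVert_w, upVert_ne _ _ _ _ _ _ _ _ v' hv']
      simp [op_mul, op_zero]
    · rw [if_neg (fun h : v = v' => hv (h ▸ hv')), hv', upVert_w, upVert_ne _ _ _ _ _ _ _ _ v hv]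
      simp [op_mul, op_zero]
    · rw [upVert_ne _ _ _ _ _ _ _ _ v hv, upVert_ne _ _ _ _ _ _ _ _ v' hv', op_mul,
        LeavittPathAlgebra.vert_mul_vert]
      by_cases h : v = v'
      · subst h
        simp
      · have hne : vtx E w f hsf huniq hnl v hv ≠ vtx E w f hsf huniq hnl v' hv' :=
          fun h' => h (congrArg Subtype.val h')
        rw [if_neg h, if_neg hne]
        simp [op_zero]
  vert_mul_edge := by
    refine edge_cases E w f ?_ (fun e hr => ?_) (fun e hr h => ?_)
    · rw [hsf, upVert_w, upEdge_f, op_mul]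
      simp [rf_mul_rf]
    · have hs : E.s e ≠ w := fun hs => hnl (huniq e hs ▸ hr)
      have := vert_mul_edge_self K _ (new E w f hsf huniq hnl e hr)
      rw [upVert_ne _ _ _ _ _ _ _ _ _ hs, upEdge_new _ _ _ _ _ _ _ _ _ hr, op_mul]
      rw [show vtx E w f hsf huniq hnl (E.s e) hs = FinGraph.s _ (new E w f hsf huniq hnl e hr)
        from rfl, this]
      simp
    · have hs : E.s e ≠ w := fun hs => h (huniq e hs)
      have := vert_mul_edge_self K _ (old E w f hsf huniq hnl e hr h)
      rw [upVert_ne _ _ _ _ _ _ _ _ _ hs, upEdge_old _ _ _ _ _ _ _ _ _ hr h, op_mul]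
      rw [show vtx E w f hsf huniq hnl (E.s e) hs = FinGraph.s _ (old E w f hsf huniq hnl e hr h)
        from rfl, this]
      simp
  edge_mul_vert := by
    refine edge_cases E w f ?_ (fun e hr => ?_) (fun e hr h => ?_)
    · rw [upVert_ne _ _ _ _ _ _ _ _ _ hnl, upEdge_f, op_mul]
      have := rf_mul_rf K E w f hsf huniq hnl
      rw [rf] at this ⊢
      simp [this]
    · have := edge_mul_vert_self K _ (new E w f hsf huniq hnl e hr)
      rw [hr, upVert_w, upEdge_new _ _ _ _ _ _ _ _ _ hr, op_mul, rf]
      rw [show vtx E w f hsf huniq hnl (E.r f) hnl = FinGraph.r _ (new E w f hsf huniq hnl e hr)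
        from rfl, this]
      simp
    · have := edge_mul_vert_self K _ (old E w f hsf huniq hnl e hr h)
      rw [upVert_ne _ _ _ _ _ _ _ _ _ hr, upEdge_old _ _ _ _ _ _ _ _ _ hr h, op_mul]
      rw [show vtx E w f hsf huniq hnl (E.r e) hr = FinGraph.r _ (old E w f hsf huniq hnl e hr h)
        from rfl, this]
      simp
  vert_mul_ghost := by
    refine edge_cases E w f ?_ (fun e hr => ?_) (fun e hr h => ?_)
    · rw [upVert_ne _ _ _ _ _ _ _ _ _ hnl, upGhost_f, op_mul]
      have := rf_mul_rf K E w f hsf huniq hnl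
      rw [rf] at this ⊢
      simp [this]
    · have := vert_mul_ghost_self K _ (new E w f hsf huniq hnl e hr)
      rw [hr, upVert_w, upGhost_new _ _ _ _ _ _ _ _ _ hr, op_mul, rf]
      rw [show vtx E w f hsf huniq hnl (E.r f) hnl = FinGraph.r _ (new E w f hsf huniq hnl e hr)
        from rfl, this]
      simp
    · have := vert_mul_ghost_self K _ (old E w f hsf huniq hnl e hr h)
      rw [upVert_ne _ _ _ _ _ _ _ _ _ hr, upGhost_old _ _ _ _ _ _ _ _ _ hr h, op_mul]
      rw [show vtx E w f hsf huniq hnl (E.r e) hr = FinGraph.r _ (old E w f hsf huniq hnl e hr h)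
        from rfl, this]
      simp
  ghost_mul_vert := by
    refine edge_cases E w f ?_ (fun e hr => ?_) (fun e hr h => ?_)
    · rw [hsf, upVert_w, upGhost_f, op_mul]
      simp [rf_mul_rf]
    · have hs : E.s e ≠ w := fun hs => hnl (huniq e hs ▸ hr)
      have := ghost_mul_vert_self K _ (new E w f hsf huniq hnl e hr)
      rw [upVert_ne _ _ _ _ _ _ _ _ _ hs, upGhost_new _ _ _ _ _ _ _ _ _ hr, op_mul]
      rw [show vtx E w f hsf huniq hnl (E.s e) hs = FinGraph.s _ (new E w f hsf huniq hnl e hr)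
        from rfl, this]
      simp
    · have hs : E.s e ≠ w := fun hs => h (huniq e hs)
      have := ghost_mul_vert_self K _ (old E w f hsf huniq hnl e hr h)
      rw [upVert_ne _ _ _ _ _ _ _ _ _ hs, upGhost_old _ _ _ _ _ _ _ _ _ hr h, op_mul]
      rw [show vtx E w f hsf huniq hnl (E.s e) hs = FinGraph.s _ (old E w f hsf huniq hnl e hr h)
        from rfl, this]
      simp
  ghost_mul_edge e e' := by
    by_cases hee : e = e'
    · subst hee
      rw [if_pos rfl]
      revert e
      refine edge_cases E w f ?_ (fun e hr => ?_) (fun e hr h => ?_)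
      · rw [upVert_ne _ _ _ _ _ _ _ _ _ hnl, upGhost_f, upEdge_f, op_mul, rf_mul_rf, rf]
        simp
      · rw [hr, upVert_w, upGhost_new _ _ _ _ _ _ _ _ _ hr, upEdge_new _ _ _ _ _ _ _ _ _ hr,
          op_mul, LeavittPathAlgebra.ghost_mul_edge, if_pos rfl, rf]
        rw [show FinGraph.r _ (new E w f hsf huniq hnl e hr) = vtx E w f hsf huniq hnl (E.r f) hnl
          from rfl]
        simp
      · rw [upVert_ne _ _ _ _ _ _ _ _ _ hr, upGhost_old _ _ _ _ _ _ _ _ _ hr h,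
          upEdge_old _ _ _ _ _ _ _ _ _ hr h, op_mul, LeavittPathAlgebra.ghost_mul_edge, if_pos rfl]
        rw [show FinGraph.r _ (old E w f hsf huniq hnl e hr h) =
          vtx E w f hsf huniq hnl (E.r e) hr from rfl]
        simp
    · rw [if_neg hee]
      revert e'
      revert e
      refine edge_cases E w f ?_ (fun e hr => ?_) (fun e hr h => ?_) <;>
        refine edge_cases E w f ?_ (fun e' hr' => ?_) (fun e' hr' h' => ?_) <;> intro hee
      · exact absurd rfl hee
      · rw [upGhost_f, upEdge_new _ _ _ _ _ _ _ _ _ hr', op_mul]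
        simp [op_zero]
      · rw [upGhost_f, upEdge_old _ _ _ _ _ _ _ _ _ hr' h', op_mul]
        simp [op_zero]
      · rw [upGhost_new _ _ _ _ _ _ _ _ _ hr, upEdge_f, op_mul]
        simp [op_zero]
      · have hne : new E w f hsf huniq hnl e hr ≠
            new E w f hsf huniq hnl e' hr' :=
          fun h => hee (congrArg Subtype.val (Sum.inr.inj h))
        rw [upGhost_new _ _ _ _ _ _ _ _ _ hr, upEdge_new _ _ _ _ _ _ _ _ _ hr', op_mul,
          LeavittPathAlgebra.ghost_mul_edge, if_neg hne]
        simp [op_zero]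
      · have hne : new E w f hsf huniq hnl e hr ≠
            old E w f hsf huniq hnl e' hr' h' := Sum.inr_ne_inl
        rw [upGhost_new _ _ _ _ _ _ _ _ _ hr, upEdge_old _ _ _ _ _ _ _ _ _ hr' h', op_mul,
          LeavittPathAlgebra.ghost_mul_edge, if_neg hne]
        simp [op_zero]
      · rw [upGhost_old _ _ _ _ _ _ _ _ _ hr h, upEdge_f, op_mul]
        simp [op_zero]
      · have hne : old E w f hsf huniq hnl e hr h ≠
            new E w f hsf huniq hnl e' hr' := Sum.inl_ne_inr
        rw [upGhost_old _ _ _ _ _ _ _ _ _ hr h, upEdge_new _ _ _ _ _ _ _ _ _ hr', op_mul,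
          LeavittPathAlgebra.ghost_mul_edge, if_neg hne]
        simp [op_zero]
      · have hne : old E w f hsf huniq hnl e hr h ≠
            old E w f hsf huniq hnl e' hr' h' :=
          fun h => hee (congrArg Subtype.val (Sum.inl.inj h))
        rw [upGhost_old _ _ _ _ _ _ _ _ _ hr h, upEdge_old _ _ _ _ _ _ _ _ _ hr' h', op_mul,
          LeavittPathAlgebra.ghost_mul_edge, if_neg hne]
        simp [op_zero]
  vert_eq_sum v hv := by
    by_cases hvw : v = w
    · have : Finset.univ.filter (fun e : E.E => E.s e = v) = {f} := by
        ext e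
        simp only [Finset.mem_filter, Finset.mem_univ, true_and, Finset.mem_singleton]
        exact ⟨fun h => huniq e (h.trans hvw), fun h => h ▸ hsf.trans hvw.symm⟩
      rw [this, Finset.sum_singleton, hvw, upVert_w, upEdge_f, upGhost_f, op_mul, rf_mul_rf]
      simp
    · have hreg := (isRegular_iff E w f hsf huniq hnl (vtx E w f hsf huniq hnl v hvw)).2 hv
      rw [upVert_ne _ _ _ _ _ _ _ _ v hvw, LeavittPathAlgebra.vert_eq_sum _ _ _ hreg, ← op_sum]
      refine Eq.trans (Finset.sum_congr rfl ?_)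
        (sum_edges E w f hsf huniq hnl (vtx E w f hsf huniq hnl v hvw) _).symm
      rintro (e | e) _
      · change op K N (edge K _ (old E w f hsf huniq hnl e.1 e.2.1 e.2.2) *
            ghost K _ (old E w f hsf huniq hnl e.1 e.2.1 e.2.2)) 0 0 0 =
          upEdge K E w f hsf huniq hnl N e.1 * upGhost K E w f hsf huniq hnl N e.1
        rw [upGhost_old _ _ _ _ _ _ _ _ _ e.2.1 e.2.2, upEdge_old _ _ _ _ _ _ _ _ _ e.2.1 e.2.2,
          op_mul]
        simp
      · change op K N (edge K _ (new E w f hsf huniq hnl e.1 e.2) *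
            ghost K _ (new E w f hsf huniq hnl e.1 e.2)) 0 0 0 =
          upEdge K E w f hsf huniq hnl N e.1 * upGhost K E w f hsf huniq hnl N e.1
        rw [upGhost_new _ _ _ _ _ _ _ _ _ e.2, upEdge_new _ _ _ _ _ _ _ _ _ e.2, op_mul]
        simp

/-- The idempotent of the family `up` is the projection of `N × N` onto `N × r(f) N`. -/
lemma up_unit : (up K E w f hsf huniq hnl N).unit =
    op K N 1 0 0 (rf K E w f hsf huniq hnl) := by
  rw [LeavittFamily.unit, Fintype.sum_eq_add_sum_subtype_ne _ w]
  have h : ∑ v : {v : E.V // v ≠ w}, (up K E w f hsf huniq hnl N).vert v.1 =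
      op K N (1 : LeavittPathAlgebra K (E.moveR w f hsf huniq hnl)) 0 0 0 := by
    rw [one_eq_sum, ← op_sum]
    exact Finset.sum_congr rfl fun v _ => upVert_ne K E w f hsf huniq hnl N v.1 v.2
  rw [h]
  change upVert K E w f hsf huniq hnl N w + _ = _
  rw [upVert_w, op_add]
  simp

end up

local notation "𝔇" => down K E w f hsf huniq hnl
local notation "𝔊" => FinGraph.moveR E w f hsf huniq hnl

/-! ### Homomorphisms `M → M'` and their restrictions to `(1 - w) M` -/

section Lift

open LeavittFamily.Cut

variable {M : Type} [AddCommGroup M] [Module K M] [Module (LeavittPathAlgebra K E) M]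
  [IsScalarTower K (LeavittPathAlgebra K E) M]
variable {M' : Type} [AddCommGroup M'] [Module K M'] [Module (LeavittPathAlgebra K E) M']
  [IsScalarTower K (LeavittPathAlgebra K E) M']

lemma edge_f_mul_vert_w (hnl : E.r f ≠ w) : edge K E f * vert K E w = 0 := by
  rw [LeavittPathAlgebra.edge_mul_vert, if_neg hnl]

/-- Every `m` is the sum of `(1 - w) m` and `w m = f (f* m)`, where `f* m` lies in
`(1 - w) M`. -/
lemma decomp (m : M) :
    incl 𝔇 (proj (K := K) 𝔇 m) + edge K E f • incl 𝔇 (proj (K := K) 𝔇 (ghost K E f • m)) = m := by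
  rw [incl_proj, incl_proj, down_unit, smul_smul, smul_smul, ← add_smul]
  have h : 1 - vert K E w + edge K E f * (1 - vert K E w) * ghost K E f = 1 := by
    rw [mul_sub, mul_one, edge_f_mul_vert_w K E w f hnl, sub_zero,
      edge_mul_ghost_self K E w f hsf huniq, sub_add_cancel]
  rw [h, one_smul]

/-- Tool for computing `(1 - w) a m`: if `(1 - w) a = b (1 - w) c`, and `b` acts on `(1 - w) M`
as the element `b'` of the Leavitt path algebra of the Move (R) graph does, then
`(1 - w) a m` equals `b'` applied to `(1 - w) c m`. -/
lemma proj_smul_eq (a b c : LeavittPathAlgebra K E) (b' : LeavittPathAlgebra K 𝔊) (m : M)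
    (hb : ∀ n : LeavittFamily.Cut K 𝔇 M, incl 𝔇 (b' • n) = b • incl 𝔇 n)
    (h : (1 - vert K E w) * a = b * (1 - vert K E w) * c) :
    proj (K := K) 𝔇 (a • m) = b' • proj 𝔇 (c • m) := by
  apply incl_injective
  rw [hb, incl_proj, incl_proj, down_unit, smul_smul, smul_smul, smul_smul, h]

lemma proj_smul_eq_zero (a : LeavittPathAlgebra K E) (m : M)
    (h : (1 - vert K E w) * a = 0) : proj (K := K) 𝔇 (a • m) = 0 := by
  apply incl_injective
  rw [incl_proj, down_unit, smul_smul, h, zero_smul, map_zero]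

lemma smul_incl_eq_zero (a : LeavittPathAlgebra K E) (n : LeavittFamily.Cut K 𝔇 M)
    (h : a * (1 - vert K E w) = 0) : a • incl 𝔇 n = 0 := by
  rw [← unit_smul_incl, down_unit, smul_smul, h, zero_smul]

lemma incl_vtx (v : E.V) (h : v ≠ w) (n : LeavittFamily.Cut K 𝔇 M) :
    incl 𝔇 (vert K _ (vtx E w f hsf huniq hnl v h) • n) = vert K E v • incl 𝔇 n :=
  incl_vert_smul 𝔇 _ n

lemma incl_edge_old (e : E.E) (hr : E.r e ≠ w) (h : e ≠ f) (n : LeavittFamily.Cut K 𝔇 M) :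
    incl 𝔇 (edge K _ (old E w f hsf huniq hnl e hr h) • n) = edge K E e • incl 𝔇 n :=
  incl_edge_smul 𝔇 _ n

lemma incl_ghost_old (e : E.E) (hr : E.r e ≠ w) (h : e ≠ f) (n : LeavittFamily.Cut K 𝔇 M) :
    incl 𝔇 (ghost K _ (old E w f hsf huniq hnl e hr h) • n) = ghost K E e • incl 𝔇 n :=
  incl_ghost_smul 𝔇 _ n

lemma incl_edge_new (e : E.E) (hr : E.r e = w) (n : LeavittFamily.Cut K 𝔇 M) :
    incl 𝔇 (edge K _ (new E w f hsf huniq hnl e hr) • n) =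
      (edge K E e * edge K E f) • incl 𝔇 n :=
  incl_edge_smul 𝔇 _ n

lemma incl_ghost_new (e : E.E) (hr : E.r e = w) (n : LeavittFamily.Cut K 𝔇 M) :
    incl 𝔇 (ghost K _ (new E w f hsf huniq hnl e hr) • n) =
      (ghost K E f * ghost K E e) • incl 𝔇 n :=
  incl_ghost_smul 𝔇 _ n

/-- The underlying `K`-linear map of the extension of `h : (1 - w) M → (1 - w) M'` to `M → M'`:
it is `h` on `(1 - w) M` and `f h f*` on `w M`. -/
noncomputable def lift (h : LeavittFamily.Cut K 𝔇 M →ₗ[LeavittPathAlgebra K 𝔊] LeavittFamily.Cut K 𝔇 M') :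
    M →ₗ[K] M' :=
  incl 𝔇 ∘ₗ h.restrictScalars K ∘ₗ proj 𝔇 +
    Algebra.lsmul K K M' (edge K E f) ∘ₗ incl 𝔇 ∘ₗ h.restrictScalars K ∘ₗ proj 𝔇 ∘ₗ
      Algebra.lsmul K K M (ghost K E f)

variable (h : LeavittFamily.Cut K (down K E w f hsf huniq hnl) M
  →ₗ[LeavittPathAlgebra K (E.moveR w f hsf huniq hnl)] LeavittFamily.Cut K (down K E w f hsf huniq hnl) M')

lemma lift_apply (m : M) : lift K E w f hsf huniq hnl h m =
    incl 𝔇 (h (proj 𝔇 m)) + edge K E f • incl 𝔇 (h (proj 𝔇 (ghost K E f • m))) := rfl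

lemma lift_vert (v : E.V) (m : M) : lift K E w f hsf huniq hnl h (vert K E v • m) =
    vert K E v • lift K E w f hsf huniq hnl h m := by
  simp only [lift_apply, smul_add, smul_smul]
  by_cases hv : v = w
  · subst hv
    rw [proj_smul_eq_zero _ _ _ _ _ _ _ (vert K E v)
        (h := by simp [sub_mul, LeavittPathAlgebra.vert_mul_vert]),
      smul_incl_eq_zero _ _ _ _ _ _ _ (vert K E v)
        (h := by simp [mul_sub, LeavittPathAlgebra.vert_mul_vert]), map_zero, map_zero,
      LeavittPathAlgebra.ghost_mul_vert, if_pos hsf, LeavittPathAlgebra.vert_mul_edge,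
      if_pos hsf.symm]
  · have h1 : proj (K := K) 𝔇 (vert K E v • m) =
        vert K _ (vtx E w f hsf huniq hnl v hv) • proj 𝔇 ((1 : LeavittPathAlgebra K E) • m) :=
      proj_smul_eq K E w f hsf huniq hnl _ _ _ _ _ (incl_vtx K E w f hsf huniq hnl v hv) (by
        simp [sub_mul, mul_sub, LeavittPathAlgebra.vert_mul_vert, hv, Ne.symm hv])
    have h2 : ghost K E f * vert K E v = 0 := by
      rw [LeavittPathAlgebra.ghost_mul_vert, if_neg (fun h => hv (h.symm.trans hsf))]
    have h3 : vert K E v * edge K E f = 0 := by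
      rw [LeavittPathAlgebra.vert_mul_edge, if_neg (fun h => hv (h.trans hsf))]
    rw [h1, one_smul, map_smul, incl_vtx, h2, h3]
    simp

lemma lift_edge (e : E.E) (m : M) : lift K E w f hsf huniq hnl h (edge K E e • m) =
    edge K E e • lift K E w f hsf huniq hnl h m := by
  simp only [lift_apply, smul_add, smul_smul]
  revert e
  refine edge_cases E w f ?_ (fun e hr => ?_) (fun e hr he => ?_)
  -- `f f = 0` and `f* f = r(f)`
  · have h1 : proj (K := K) 𝔇 (vert K E (E.r f) • m) =
        vert K _ (vtx E w f hsf huniq hnl (E.r f) hnl) •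
          proj 𝔇 ((1 : LeavittPathAlgebra K E) • m) :=
      proj_smul_eq K E w f hsf huniq hnl _ _ _ _ _ (incl_vtx K E w f hsf huniq hnl _ hnl) (by
        simp [sub_mul, mul_sub, LeavittPathAlgebra.vert_mul_vert, hnl, Ne.symm hnl])
    rw [proj_smul_eq_zero _ _ _ _ _ _ _ (edge K E f)
        (h := by simp [sub_mul, LeavittPathAlgebra.vert_mul_edge, hsf]),
      edge_mul_edge_of_ne (fun h => hnl (h.trans hsf)),
      LeavittPathAlgebra.ghost_mul_edge, if_pos rfl, h1, one_smul, map_smul, incl_vtx, smul_smul,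
      edge_mul_vert_self]
    simp
  -- `e (1 - w) = 0` and `e = e f f*`
  · have hef : e ≠ f := fun h => hnl (h ▸ hr)
    have hs : E.s e ≠ w := fun hs => hef (huniq e hs)
    have h1 : proj (K := K) 𝔇 (edge K E e • m) =
        edge K _ (new E w f hsf huniq hnl e hr) • proj 𝔇 (ghost K E f • m) :=
      proj_smul_eq K E w f hsf huniq hnl _ _ _ _ _ (incl_edge_new K E w f hsf huniq hnl e hr) (by
        rw [mul_sub, mul_one, mul_assoc _ _ (vert K E w), edge_f_mul_vert_w K E w f hnl, mul_zero,
          sub_zero, mul_assoc, edge_mul_ghost_self K E w f hsf huniq, sub_mul,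
          LeavittPathAlgebra.vert_mul_edge, if_neg (Ne.symm hs),
          LeavittPathAlgebra.edge_mul_vert, if_pos hr, one_mul, sub_zero])
    rw [h1, map_smul, incl_edge_new, LeavittPathAlgebra.ghost_mul_edge, if_neg (Ne.symm hef),
      smul_incl_eq_zero _ _ _ _ _ _ _ (edge K E e)
        (h := by rw [mul_sub, mul_one, LeavittPathAlgebra.edge_mul_vert, if_pos hr, sub_self])]
    simp
  · have hs : E.s e ≠ w := fun hs => he (huniq e hs)
    have h1 : proj (K := K) 𝔇 (edge K E e • m) =
        edge K _ (old E w f hsf huniq hnl e hr he) • proj 𝔇 ((1 : LeavittPathAlgebra K E) • m) :=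
      proj_smul_eq K E w f hsf huniq hnl _ _ _ _ _ (incl_edge_old K E w f hsf huniq hnl e hr he) (by
        simp [sub_mul, mul_sub, LeavittPathAlgebra.vert_mul_edge,
          LeavittPathAlgebra.edge_mul_vert, hr, Ne.symm hs])
    rw [h1, one_smul, map_smul, incl_edge_old, LeavittPathAlgebra.ghost_mul_edge,
      if_neg (Ne.symm he), edge_mul_edge_of_ne (fun h => hr (h.trans hsf))]
    simp

lemma lift_ghost (e : E.E) (m : M) : lift K E w f hsf huniq hnl h (ghost K E e • m) =
    ghost K E e • lift K E w f hsf huniq hnl h m := by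
  simp only [lift_apply, smul_add, smul_smul]
  revert e
  refine edge_cases E w f ?_ (fun e hr => ?_) (fun e hr he => ?_)
  -- `f* f* = 0`, `f* (1 - w) = 0`, and `f* = r(f) f*`
  · have h1 : proj (K := K) 𝔇 (ghost K E f • m) =
        vert K _ (vtx E w f hsf huniq hnl (E.r f) hnl) • proj 𝔇 (ghost K E f • m) :=
      proj_smul_eq K E w f hsf huniq hnl _ _ _ _ _ (incl_vtx K E w f hsf huniq hnl _ hnl) (by
        simp [sub_mul, mul_sub, LeavittPathAlgebra.vert_mul_vert,
          LeavittPathAlgebra.vert_mul_ghost, hnl, Ne.symm hnl])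
    rw [ghost_mul_ghost_of_ne (fun h => hnl (h.symm.trans hsf)),
      smul_incl_eq_zero _ _ _ _ _ _ _ (ghost K E f)
        (h := by rw [mul_sub, mul_one, LeavittPathAlgebra.ghost_mul_vert, if_pos hsf, sub_self]),
      LeavittPathAlgebra.ghost_mul_edge, if_pos rfl, ← incl_vtx K E w f hsf huniq hnl _ hnl,
      ← map_smul h, ← h1]
    simp
  -- `(1 - w) e* = 0` and `e* = f f* e*`
  · have hef : e ≠ f := fun h => hnl (h ▸ hr)
    have hs : E.s e ≠ w := fun hs => hef (huniq e hs)
    have h1 : proj (K := K) 𝔇 ((ghost K E f * ghost K E e) • m) =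
        ghost K _ (new E w f hsf huniq hnl e hr) • proj 𝔇 ((1 : LeavittPathAlgebra K E) • m) :=
      proj_smul_eq K E w f hsf huniq hnl _ _ _ _ _ (incl_ghost_new K E w f hsf huniq hnl e hr) (by
        rw [mul_one, mul_sub, mul_one, mul_assoc _ _ (vert K E w),
          LeavittPathAlgebra.ghost_mul_vert, if_neg hs, sub_mul, ← mul_assoc (vert K E w),
          LeavittPathAlgebra.vert_mul_ghost, if_neg (Ne.symm hnl), one_mul, zero_mul, mul_zero])
    rw [h1, one_smul, map_smul h, incl_ghost_new, smul_smul, ← mul_assoc,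
      edge_mul_ghost_self K E w f hsf huniq, LeavittPathAlgebra.vert_mul_ghost, if_pos hr.symm,
      LeavittPathAlgebra.ghost_mul_edge, if_neg hef,
      proj_smul_eq_zero _ _ _ _ _ _ _ (ghost K E e)
        (h := by rw [sub_mul, one_mul, LeavittPathAlgebra.vert_mul_ghost, if_pos hr.symm, sub_self])]
    simp
  · have hs : E.s e ≠ w := fun hs => he (huniq e hs)
    have h1 : proj (K := K) 𝔇 (ghost K E e • m) =
        ghost K _ (old E w f hsf huniq hnl e hr he) • proj 𝔇 ((1 : LeavittPathAlgebra K E) • m) :=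
      proj_smul_eq K E w f hsf huniq hnl _ _ _ _ _
        (incl_ghost_old K E w f hsf huniq hnl e hr he) (by
        simp [sub_mul, mul_sub, LeavittPathAlgebra.vert_mul_ghost,
          LeavittPathAlgebra.ghost_mul_vert, hs, Ne.symm hr])
    rw [h1, one_smul, map_smul, incl_ghost_old, LeavittPathAlgebra.ghost_mul_edge,
      if_neg he, ghost_mul_ghost_of_ne (fun h => hr (h.symm.trans hsf))]
    simp

/-- `lift` as an `L_K(E)`-linear map. -/
noncomputable def liftLinear : M →ₗ[LeavittPathAlgebra K E] M' :=
  { lift K E w f hsf huniq hnl h with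
    map_smul' := map_smul_of_generators _ (lift_vert K E w f hsf huniq hnl h)
      (lift_edge K E w f hsf huniq hnl h) (lift_ghost K E w f hsf huniq hnl h) }

lemma map_liftLinear : LeavittFamily.Cut.map 𝔇 (liftLinear K E w f hsf huniq hnl h) = h := by
  refine LinearMap.ext fun n => incl_injective _ ?_
  rw [incl_map]
  change lift K E w f hsf huniq hnl h (incl 𝔇 n) = _
  have h1 : proj 𝔇 (incl 𝔇 n) = n := by
    apply incl_injective
    rw [incl_proj, unit_smul_incl]
  rw [lift_apply, h1, smul_incl_eq_zero _ _ _ _ _ _ _ (ghost K E f)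
    (h := by rw [mul_sub, mul_one, LeavittPathAlgebra.ghost_mul_vert, if_pos hsf, sub_self])]
  simp

end Lift

/-! ### Recovering `N` from `N × r(f) N` -/

section Surj

open LeavittFamily.Cut

variable (N : Type) [AddCommGroup N] [Module K N] [Module (LeavittPathAlgebra K (E.moveR w f hsf huniq hnl)) N]
  [IsScalarTower K (LeavittPathAlgebra K (E.moveR w f hsf huniq hnl)) N]

local notation "𝔘" => up K E w f hsf huniq hnl N

variable (P : Type) [AddCommGroup P] [Module K P] [Module (LeavittPathAlgebra K E) P]
  [IsScalarTower K (LeavittPathAlgebra K E) P]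
  (j : P ≃ₗ[LeavittPathAlgebra K E] LeavittFamily.Cut K (up K E w f hsf huniq hnl N) (N × N))

/-- First coordinate `(1 - w) P → N`, where `P` is a copy of the `L_K(E)`-module `N × r(f) N`
defined by the family `up`, with its own (compatible) `K`-module structure. -/
noncomputable def fstLinear : LeavittFamily.Cut K 𝔇 P →ₗ[K] N :=
  LinearMap.fst K N N ∘ₗ incl 𝔘 ∘ₗ (j.toLinearMap.restrictScalars K) ∘ₗ incl 𝔇

lemma fstLinear_apply (y : LeavittFamily.Cut K 𝔇 P) :
    fstLinear K E w f hsf huniq hnl N P j y = (incl 𝔘 (j (incl 𝔇 y))).1 := rfl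

/-- On `(1 - w) P` the second coordinate vanishes. -/
lemma snd_eq_zero (y : LeavittFamily.Cut K 𝔇 P) : (incl 𝔘 (j (incl 𝔇 y))).2 = 0 := by
  have h1 : vert K E w • incl 𝔇 y = 0 := smul_incl_eq_zero K E w f hsf huniq hnl _ _ (by
    rw [mul_sub, mul_one, LeavittPathAlgebra.vert_mul_vert, if_pos rfl, sub_self])
  have h2 := congrArg (fun z => (incl 𝔘 (j z)).2) h1
  have h3 := congrArg Prod.snd (unit_smul_incl 𝔘 (j (incl 𝔇 y)))
  rw [up_unit] at h3
  simp only [map_smul, incl_vert_smul, map_zero] at h2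
  change (upVert K E w f hsf huniq hnl N w • _ : N × N).2 = _ at h2
  rw [upVert_w] at h2
  simp only [Module.End.smul_def, op_apply, zero_smul, zero_add, Prod.snd_zero] at h2 h3
  rw [← h3, h2]

lemma fstLinear_smul (a : LeavittPathAlgebra K 𝔊) (y : LeavittFamily.Cut K 𝔇 P) :
    fstLinear K E w f hsf huniq hnl N P j (a • y) =
      a • fstLinear K E w f hsf huniq hnl N P j y := by
  have hz := snd_eq_zero K E w f hsf huniq hnl N P j
  have hup : (𝔘).vert = upVert K E w f hsf huniq hnl N ∧
    (𝔘).edge = upEdge K E w f hsf huniq hnl N ∧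
    (𝔘).ghost = upGhost K E w f hsf huniq hnl N := ⟨rfl, rfl, rfl⟩
  obtain ⟨hV, hE, hG⟩ := hup
  refine map_smul_of_generators _ ?_ ?_ ?_ a y
  · rintro ⟨v, hv⟩ y
    change fstLinear K E w f hsf huniq hnl N P j (vert K _ (vtx E w f hsf huniq hnl v hv) • y) =
      vert K _ (vtx E w f hsf huniq hnl v hv) • _
    rw [fstLinear_apply, fstLinear_apply, incl_vtx, map_smul, incl_vert_smul, hV,
      upVert_ne _ _ _ _ _ _ _ _ v hv]
    simp [hz]
  · rintro (⟨e, hr, he⟩ | ⟨e, hr⟩) y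
    · change fstLinear K E w f hsf huniq hnl N P j
        (edge K _ (old E w f hsf huniq hnl e hr he) • y) =
        edge K _ (old E w f hsf huniq hnl e hr he) • _
      rw [fstLinear_apply, fstLinear_apply, incl_edge_old, map_smul, incl_edge_smul, hE,
        upEdge_old _ _ _ _ _ _ _ _ e hr he]
      simp [hz]
    · change fstLinear K E w f hsf huniq hnl N P j
        (edge K _ (new E w f hsf huniq hnl e hr) • y) =
        edge K _ (new E w f hsf huniq hnl e hr) • _
      have h1 := edge_mul_vert_self K _ (new E w f hsf huniq hnl e hr)
      rw [fstLinear_apply, fstLinear_apply, incl_edge_new, mul_smul, map_smul j, map_smul j,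
        incl_edge_smul, incl_edge_smul, hE, upEdge_new _ _ _ _ _ _ _ _ e hr, upEdge_f]
      simp only [Module.End.smul_def, op_apply, hz, zero_smul, zero_add, add_zero, smul_zero,
        smul_smul]
      exact congrArg (· • _) h1
  · rintro (⟨e, hr, he⟩ | ⟨e, hr⟩) y
    · change fstLinear K E w f hsf huniq hnl N P j
        (ghost K _ (old E w f hsf huniq hnl e hr he) • y) =
        ghost K _ (old E w f hsf huniq hnl e hr he) • _
      rw [fstLinear_apply, fstLinear_apply, incl_ghost_old, map_smul, incl_ghost_smul, hG,
        upGhost_old _ _ _ _ _ _ _ _ e hr he]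
      simp [hz]
    · change fstLinear K E w f hsf huniq hnl N P j
        (ghost K _ (new E w f hsf huniq hnl e hr) • y) =
        ghost K _ (new E w f hsf huniq hnl e hr) • _
      have h1 := vert_mul_ghost_self K _ (new E w f hsf huniq hnl e hr)
      rw [fstLinear_apply, fstLinear_apply, incl_ghost_new, mul_smul, map_smul j, map_smul j,
        incl_ghost_smul, incl_ghost_smul, hG, upGhost_new _ _ _ _ _ _ _ _ e hr, upGhost_f]
      simp only [Module.End.smul_def, op_apply, hz, zero_smul, zero_add, add_zero, smul_zero,
        smul_smul]
      exact congrArg (· • _) h1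

lemma fstLinear_bijective : Function.Bijective (fstLinear K E w f hsf huniq hnl N P j) := by
  constructor
  · intro y y' h
    apply incl_injective
    apply j.injective
    apply incl_injective
    exact Prod.ext h (by rw [snd_eq_zero, snd_eq_zero])
  · intro n
    have h1 : (𝔘).unit • ((n, 0) : N × N) = (n, 0) := by
      rw [up_unit]
      simp
    have h2 : (𝔇).unit • j.symm (mk 𝔘 (n, 0) h1) = j.symm (mk 𝔘 (n, 0) h1) := by
      apply j.injective
      apply incl_injective
      rw [down_unit, sub_smul, one_smul, map_sub, map_sub, map_smul, incl_vert_smul,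
        j.apply_symm_apply, incl_mk]
      change (n, 0) - upVert K E w f hsf huniq hnl N w • ((n, 0) : N × N) = _
      rw [upVert_w]
      simp
    refine ⟨mk 𝔇 _ h2, ?_⟩
    rw [fstLinear_apply, incl_mk, j.apply_symm_apply, incl_mk]

/-- The first coordinate is an isomorphism from `(1 - w) P` onto `N`. -/
noncomputable def fstEquiv : LeavittFamily.Cut K 𝔇 P ≃ₗ[LeavittPathAlgebra K 𝔊] N :=
  LinearEquiv.ofBijective
    { fstLinear K E w f hsf huniq hnl N P j with
      map_smul' := fstLinear_smul K E w f hsf huniq hnl N P j }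
    (fstLinear_bijective K E w f hsf huniq hnl N P j)

end Surj

/-! ### The functor `M ↦ (1 - w) M` is an equivalence -/

instance cut_faithful : ((𝔇).cutFunctor K).Faithful where
  map_injective {_ _} φ ψ h := by
    have h' : ∀ m, φ.hom (LeavittFamily.Cut.incl (K := K) 𝔇 m) =
        ψ.hom (LeavittFamily.Cut.incl (K := K) 𝔇 m) := fun m =>
      congrArg (LeavittFamily.Cut.incl 𝔇) (LinearMap.congr_fun (congrArg ModuleCat.Hom.hom h) m)
    ext m
    rw [← decomp K E w f hsf huniq hnl m]
    simp only [map_add, map_smul, h']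

instance cut_full : ((𝔇).cutFunctor K).Full where
  map_surjective {_ _} h :=
    ⟨ModuleCat.ofHom (liftLinear K E w f hsf huniq hnl h.hom),
      ModuleCat.hom_ext (map_liftLinear K E w f hsf huniq hnl h.hom)⟩

/-- The `K`-module structure that `ModuleCat` puts on its objects is propositionally, but not
definitionally, the one of `Cut`. Hence `P` is any object isomorphic to `Cut`, instead of `Cut`
itself. -/
lemma nonempty_cut_iso (N : ModuleCat.{0} (LeavittPathAlgebra K 𝔊))
    (P : ModuleCat.{0} (LeavittPathAlgebra K E))
    (j : P ≃ₗ[LeavittPathAlgebra K E]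
      LeavittFamily.Cut K (up K E w f hsf huniq hnl N) (N × N)) :
    Nonempty (((𝔇).cutFunctor K).obj P ≅ N) :=
  ⟨(fstEquiv K E w f hsf huniq hnl N P j).toModuleIso⟩

instance cut_essSurj : ((𝔇).cutFunctor K).EssSurj where
  mem_essImage N :=
    ⟨_, nonempty_cut_iso K E w f hsf huniq hnl N (ModuleCat.of (LeavittPathAlgebra K E)
      (LeavittFamily.Cut K (up K E w f hsf huniq hnl N) (N × N))) (LinearEquiv.refl _ _)⟩

end MoveR

end MoveR

/-- Move (R) preserves Morita equivalence of Leavitt path algebras. -/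
theorem moveR_moritaEquivalent (K : Type) [Field K] (E : FinGraph) (w : E.V) (f : E.E)
    (hsf : E.s f = w) (huniq : ∀ e : E.E, E.s e = w → e = f) (hnl : E.r f ≠ w)
    (hrecv : ∃ u : E.V, ∀ e : E.E, E.r e = w → E.s e = u) :
    MoritaEquivalent (LeavittPathAlgebra K E)
      (LeavittPathAlgebra K (E.moveR w f hsf huniq hnl)) := by
  have : ((MoveR.down K E w f hsf huniq hnl).cutFunctor K).IsEquivalence := { }
  exact ⟨((MoveR.down K E w f hsf huniq hnl).cutFunctor K).asEquivalence⟩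
end

section
/- Let K be any field, let E be a finite graph, and let v ∈ E^0 be a regular vertex which emits precisely one edge f_0 with r(f_0) ≠ v (i.e., f_0 is not a loop). Let G be the collapse-at-v graph. Then L_K(E) is Morita equivalent to L_K(G). -/
/-! ### Full corners and Morita equivalence -/

section Corner

open CategoryTheory

variable {R S : Type} [Ring R] [Ring S]

/-- The part `ε M = {m | ε m = m}` of a module `M` on which the idempotent `ε = φ 1` acts as the
identity, where `φ` is a not necessarily unital ring homomorphism. -/
def cornerPart (φ : S →ₙ+* R) (M : Type) [AddCommGroup M] [Module R M] : AddSubgroup M where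
  carrier := {m | φ 1 • m = m}
  add_mem' := by
    intro x y hx hy
    simp only [Set.mem_ofPred_eq] at *
    rw [smul_add, hx, hy]
  zero_mem' := smul_zero _
  neg_mem' := by
    intro x hx
    simp only [Set.mem_ofPred_eq] at *
    rw [smul_neg, hx]

theorem mem_cornerPart {φ : S →ₙ+* R} {M : Type} [AddCommGroup M] [Module R M] {m : M} :
    m ∈ cornerPart φ M ↔ φ 1 • m = m := Iff.rfl

theorem smul_mem_cornerPart (φ : S →ₙ+* R) {M : Type} [AddCommGroup M] [Module R M]
    (s : S) (m : M) : φ s • m ∈ cornerPart φ M := by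
  rw [mem_cornerPart, smul_smul, ← map_mul, one_mul]

/-- `S` acts unitally on `ε M` through `φ`. -/
instance cornerPart.module (φ : S →ₙ+* R) (M : Type) [AddCommGroup M] [Module R M] :
    Module S (cornerPart φ M) where
  smul s m := ⟨φ s • (m : M), smul_mem_cornerPart φ s _⟩
  one_smul m := Subtype.ext m.2
  mul_smul s t m := Subtype.ext (by
    change φ (s * t) • (m : M) = φ s • φ t • (m : M)
    rw [map_mul, mul_smul])
  smul_zero s := Subtype.ext (smul_zero (φ s))
  smul_add s m n := Subtype.ext (smul_add (φ s) (m : M) n)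
  add_smul s t m := Subtype.ext (by
    change φ (s + t) • (m : M) = φ s • (m : M) + φ t • (m : M)
    rw [map_add, add_smul])
  zero_smul m := Subtype.ext (by
    change φ 0 • (m : M) = 0
    rw [map_zero, zero_smul])

@[simp] theorem cornerPart.coe_smul (φ : S →ₙ+* R) (M : Type) [AddCommGroup M] [Module R M]
    (s : S) (m : cornerPart φ M) : ((s • m : cornerPart φ M) : M) = φ s • (m : M) := rfl

/-- The restriction `ε M → ε N` of an `R`-linear map `M → N`. -/
def cornerPart.map (φ : S →ₙ+* R) {M N : Type} [AddCommGroup M] [Module R M] [AddCommGroup N]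
    [Module R N] (g : M →ₗ[R] N) : cornerPart φ M →ₗ[S] cornerPart φ N where
  toFun m := ⟨g m, by rw [mem_cornerPart, ← map_smul, m.2]⟩
  map_add' m n := Subtype.ext (map_add g (m : M) n)
  map_smul' s m := Subtype.ext (map_smul g (φ s) (m : M))

/-- The functor `M ↦ ε M` from `R`-modules to `S`-modules. -/
def cornerFunctor (φ : S →ₙ+* R) : ModuleCat.{0} R ⥤ ModuleCat.{0} S where
  obj M := ModuleCat.of S (cornerPart φ M)
  map g := ModuleCat.ofHom (cornerPart.map φ g.hom)
  map_id _ := rfl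
  map_comp _ _ := rfl

/-- An `S`-linear map `ε M → ε N` extends to an `R`-linear map `M → N` as soon as `ε` is full and
`φ` maps onto `ε R ε`: with `1 = ∑ aᵢ ε bᵢ`, the extension is `m ↦ ∑ aᵢ h(ε bᵢ m)`. -/
theorem cornerPart.exists_map_eq (φ : S →ₙ+* R) (hfull : IsFullIdempotent (φ 1))
    (hsurj : ∀ x : R, ∃ s : S, φ s = φ 1 * x * φ 1) {M N : Type} [AddCommGroup M] [Module R M]
    [AddCommGroup N] [Module R N] (h : cornerPart φ M →ₗ[S] cornerPart φ N) :
    ∃ g : M →ₗ[R] N, cornerPart.map φ g = h := by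
  obtain ⟨hid, n, a, b, hab⟩ := hfull
  -- `c m` is the element `ε m` of `ε M`
  let c : M →+ cornerPart φ M :=
    { toFun := fun m => ⟨φ 1 • m, smul_mem_cornerPart φ 1 m⟩
      map_zero' := Subtype.ext (smul_zero _)
      map_add' := fun x y => Subtype.ext (smul_add _ _ _) }
  let H : M →+ N := (cornerPart φ N).subtype.comp (h.toAddMonoidHom.comp c)
  have hH : ∀ m, φ 1 • H m = H m := fun m => (h (c m)).2
  -- `h` commutes with every element of `ε R ε`
  have hcomm : ∀ (x : R) (m : M), H (x • φ 1 • m) = φ 1 • x • H m := by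
    intro x m
    obtain ⟨s, hs⟩ := hsurj x
    have e1 : c (x • φ 1 • m) = s • c m := Subtype.ext (by
      change φ 1 • x • φ 1 • m = φ s • φ 1 • m
      rw [hs]
      simp only [smul_smul, mul_assoc, hid.eq])
    have e2 : H (x • φ 1 • m) = φ s • H m := by
      change ((h (c (x • φ 1 • m)) : cornerPart φ N) : N) = _
      rw [e1, map_smul]
      rfl
    rw [e2, hs, mul_smul, mul_smul, hH]
  have hsum : ∀ m : M, m = ∑ i, a i • φ 1 • b i • m := by
    intro m
    conv_lhs => rw [← one_smul R m, ← hab, Finset.sum_smul]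
    simp only [mul_smul]
  have hsumN : ∀ m : N, m = ∑ i, a i • φ 1 • b i • m := by
    intro m
    conv_lhs => rw [← one_smul R m, ← hab, Finset.sum_smul]
    simp only [mul_smul]
  have key : ∀ (x : R) (m : M), H (x • m) = φ 1 • x • ∑ i, a i • H (b i • m) := by
    intro x m
    conv_lhs => rw [hsum m, Finset.smul_sum, map_sum]
    rw [Finset.smul_sum, Finset.smul_sum]
    refine Finset.sum_congr rfl fun i _ => ?_
    rw [smul_smul, hcomm, mul_smul]
  let g : M →ₗ[R] N :=
    { toFun := fun m => ∑ i, a i • H (b i • m)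
      map_add' := by
        intro x y
        simp only [smul_add, map_add, Finset.sum_add_distrib]
      map_smul' := by
        intro r m
        rw [RingHom.id_apply, hsumN (r • ∑ i, a i • H (b i • m))]
        refine Finset.sum_congr rfl fun i _ => ?_
        rw [smul_smul (b i) r m, key, mul_smul] }
  refine ⟨g, LinearMap.ext fun m => Subtype.ext ?_⟩
  change g m = (h m : N)
  have hc : c m = m := Subtype.ext m.2
  have h1 : H (m : M) = (h m : N) := by
    change ((h (c m) : cornerPart φ N) : N) = _
    rw [hc]
  have h2 : (m : M) = φ 1 • (m : M) := m.2.symm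
  have h3 := key 1 m
  rw [one_smul, one_smul, h1] at h3
  rw [h3]
  change g m = φ 1 • g m
  rw [← map_smul, ← h2]

open Matrix.Module in
/-- If a non-unital homomorphism `ψ` from `R` to matrices over `S` carries `φ s` to the matrix
with single entry `s` at position `(i, i)`, then every `S`-module `N` is of the form `ε M`: take `M = ψ(1) N^ι`. -/
theorem cornerFunctor_essSurj (φ : S →ₙ+* R) {ι : Type} [Fintype ι] [DecidableEq ι]
    (ψ : R →ₙ+* Matrix ι ι S) (i : ι) (hψ : ∀ s, ψ (φ s) = Matrix.single i i s) :
    (cornerFunctor φ).EssSurj := by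
  refine ⟨fun N => ?_⟩
  let M := cornerPart ψ (ι → N)
  have single_mem : ∀ x : N, (Pi.single i x : ι → N) ∈ M := by
    intro x
    rw [mem_cornerPart]
    have h1 : (Pi.single i x : ι → N) = ψ (φ 1) • (Pi.single i x : ι → N) := by
      rw [hψ]
      simp [single_smul]
    rw [h1, smul_smul, ← map_mul, one_mul]
  let j : N ≃ₗ[S] cornerPart φ M :=
    { toFun := fun x => ⟨⟨Pi.single i x, single_mem x⟩, by
        rw [mem_cornerPart]
        refine Subtype.ext ?_
        change ψ (φ 1) • (Pi.single i x : ι → N) = Pi.single i x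
        rw [hψ]
        simp [single_smul]⟩
      invFun := fun y => (y : M).1 i
      map_add' := fun x y => Subtype.ext (Subtype.ext (by
        change (Pi.single i (x + y) : ι → N) = Pi.single i x + Pi.single i y
        exact Pi.single_add (f := fun _ => (N : Type)) i x y))
      map_smul' := fun s x => Subtype.ext (Subtype.ext (by
        change (Pi.single i (s • x) : ι → N) = ψ (φ s) • (Pi.single i x : ι → N)
        rw [hψ]
        simp [single_smul]))
      left_inv := fun x => by simp
      right_inv := fun y => by
        refine Subtype.ext (Subtype.ext ?_)
        have h : ψ (φ 1) • (y : M).1 = (y : M).1 := congrArg Subtype.val y.2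
        rw [hψ] at h
        change (Pi.single i ((y : M).1 i) : ι → N) = (y : M).1
        conv_rhs => rw [← h]
        simp [single_smul] }
  exact ⟨ModuleCat.of R M, ⟨j.toModuleIso.symm⟩⟩

/-- A homomorphism `φ` from `S` onto a full corner `ε R ε`, together with a map from `R` to
matrices over `S` that recovers `s` from `φ s`, makes `M ↦ ε M` an equivalence. -/
theorem moritaEquivalent_of_corner (φ : S →ₙ+* R) (hfull : IsFullIdempotent (φ 1))
    (hsurj : ∀ x : R, ∃ s : S, φ s = φ 1 * x * φ 1) {ι : Type} [Fintype ι] [DecidableEq ι]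
    (ψ : R →ₙ+* Matrix ι ι S) (i : ι) (hψ : ∀ s, ψ (φ s) = Matrix.single i i s) :
    MoritaEquivalent R S := by
  have hE := cornerFunctor_essSurj φ ψ i hψ
  have hFull : (cornerFunctor φ).Full := ⟨fun {M N} h => by
    obtain ⟨g, hg⟩ := cornerPart.exists_map_eq φ hfull hsurj h.hom
    exact ⟨ModuleCat.ofHom g, ModuleCat.hom_ext hg⟩⟩
  have hFaith : (cornerFunctor φ).Faithful := ⟨fun {M N} g g' hg => by
    obtain ⟨hid, n, a, b, hab⟩ := hfull
    ext m
    have hε : ∀ x : M, g.hom (φ 1 • x) = g'.hom (φ 1 • x) := fun x =>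
      congrArg Subtype.val
        (LinearMap.congr_fun (congrArg ModuleCat.Hom.hom hg)
          (⟨φ 1 • x, smul_mem_cornerPart φ 1 x⟩ : cornerPart φ M))
    rw [← one_smul R m, ← hab, Finset.sum_smul, map_sum, map_sum]
    refine Finset.sum_congr rfl fun i _ => ?_
    rw [mul_smul, mul_smul, map_smul g.hom, map_smul g'.hom, hε]⟩
  have hEq : (cornerFunctor φ).IsEquivalence := { }
  exact ⟨(cornerFunctor φ).asEquivalence⟩

end Corner

/-! ### Leavitt families and the universal property -/

section Leavitt

variable {K : Type} [Field K]

/-- Elements `a w`, `b e`, `c e` of a ring, indexed by the vertices, edges and ghost edges of `G`,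
that satisfy all the Leavitt relations except the one prescribing the unit. -/
structure IsLeavittFamily (G : FinGraph) {A : Type} [Ring A] (a : G.V → A) (b c : G.E → A) :
    Prop where
  vert_mul : ∀ u w, a u * a w = if u = w then a u else 0
  edge_left : ∀ e, a (G.s e) * b e = b e
  edge_right : ∀ e, b e * a (G.r e) = b e
  ghost_left : ∀ e, a (G.r e) * c e = c e
  ghost_right : ∀ e, c e * a (G.s e) = c e
  ghost_edge : ∀ e f, c e * b f = if e = f then a (G.r e) else 0
  cuntz_krieger : ∀ w, G.IsRegular w →
    a w = ∑ e ∈ Finset.univ.filter (fun e => G.s e = w), b e * c e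

/-- Any idempotent `p` of a `K`-algebra gives a `K`-algebra `p A p` with unit `p`. -/
abbrev cornerAlgebra {A : Type} [Ring A] [Algebra K A] {p : A} (hp : IsIdempotentElem p) :
    Algebra K hp.Corner :=
  RingHom.toAlgebra'
    { toFun := fun k => ⟨k • p, k • p, by
        simp only [mul_smul_comm, smul_mul_assoc, hp.eq]⟩
      map_one' := Subtype.ext (one_smul K p)
      map_zero' := Subtype.ext (zero_smul K p)
      map_mul' := fun k l => Subtype.ext (by
        change (k * l) • p = (k • p) * (l • p)
        rw [smul_mul_smul_comm, hp.eq])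
      map_add' := fun k l => Subtype.ext (add_smul k l p) }
    (fun k x => Subtype.ext (by
      obtain ⟨h1, h2⟩ := (Subsemigroup.mem_corner_iff hp).1 x.2
      change (k • p) * x.1 = x.1 * (k • p)
      rw [smul_mul_assoc, mul_smul_comm, h1, h2]))

namespace LeavittPathAlgebra

variable {G : FinGraph}

/-- The generators of `L_K(G)` form a Leavitt family. -/
theorem isLeavittFamily (K : Type) [Field K] (G : FinGraph) :
    IsLeavittFamily G (vert K G) (edge K G) (ghost K G) where
  vert_mul u w := by
    have h := RingQuot.mkAlgHom_rel K (LeavittRel.vertMul (K := K) u w)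
    rw [map_mul] at h
    refine h.trans ?_
    split_ifs
    · rfl
    · exact map_zero _
  edge_left e := by
    have h := RingQuot.mkAlgHom_rel K (LeavittRel.edgeLeft (K := K) e)
    rwa [map_mul] at h
  edge_right e := by
    have h := RingQuot.mkAlgHom_rel K (LeavittRel.edgeRight (K := K) e)
    rwa [map_mul] at h
  ghost_left e := by
    have h := RingQuot.mkAlgHom_rel K (LeavittRel.ghostLeft (K := K) e)
    rwa [map_mul] at h
  ghost_right e := by
    have h := RingQuot.mkAlgHom_rel K (LeavittRel.ghostRight (K := K) e)
    rwa [map_mul] at h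
  ghost_edge e f := by
    have h := RingQuot.mkAlgHom_rel K (LeavittRel.ghostEdge (K := K) e f)
    rw [map_mul] at h
    refine h.trans ?_
    split_ifs
    · rfl
    · exact map_zero _
  cuntz_krieger w hw := by
    have h := RingQuot.mkAlgHom_rel K (LeavittRel.cuntzKrieger (K := K) w hw)
    simp only [map_sum, map_mul] at h
    exact h

theorem one_eq (K : Type) [Field K] (G : FinGraph) :
    (1 : LeavittPathAlgebra K G) = ∑ w, vert K G w := by
  have h := RingQuot.mkAlgHom_rel K (LeavittRel.unit (K := K) (G := G))
  simp only [map_sum, map_one] at h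
  exact h

/-- Unlike for a general presented algebra, no case for the scalars is needed, because the unit is
the sum of the vertices. -/
theorem induction {P : LeavittPathAlgebra K G → Prop} (zero : P 0)
    (vert : ∀ w, P (vert K G w)) (edge : ∀ e, P (edge K G e)) (ghost : ∀ e, P (ghost K G e))
    (add : ∀ x y, P x → P y → P (x + y)) (mul : ∀ x y, P x → P y → P (x * y))
    (smul : ∀ (k : K) x, P x → P (k • x)) (x : LeavittPathAlgebra K G) : P x := by
  obtain ⟨x, rfl⟩ := RingQuot.mkAlgHom_surjective K (LeavittRel K G) x
  induction x using FreeAlgebra.induction with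
  | grade0 k =>
    rw [AlgHom.commutes, Algebra.algebraMap_eq_smul_one, one_eq]
    exact smul _ _ (Finset.sum_induction _ P add zero fun w _ => vert w)
  | grade1 x =>
    cases x with
    | vert w => exact vert w
    | edge e => exact edge e
    | ghost e => exact ghost e
  | mul x y hx hy => rw [map_mul]; exact mul _ _ hx hy
  | add x y hx hy => rw [map_add]; exact add _ _ hx hy

/-- The universal property of `L_K(G)` for non-unital homomorphisms: a Leavitt family in `A`
defines a homomorphism into the corner of `A` at the sum of the vertex idempotents. -/
theorem exists_lift {A : Type} [Ring A] [Algebra K A] {a : G.V → A} {b c : G.E → A}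
    (h : IsLeavittFamily G a b c) :
    ∃ φ : LeavittPathAlgebra K G →ₙₐ[K] A, (∀ w, φ (vert K G w) = a w) ∧
      (∀ e, φ (edge K G e) = b e) ∧ ∀ e, φ (ghost K G e) = c e := by
  set p : A := ∑ w, a w with hpdef
  have hpa : ∀ w, p * a w = a w := by
    intro w
    simp [hpdef, Finset.sum_mul, h.vert_mul]
  have hap : ∀ w, a w * p = a w := by
    intro w
    simp [hpdef, Finset.mul_sum, h.vert_mul]
  have hp : IsIdempotentElem p := by
    change p * p = p
    conv_lhs => rw [hpdef, Finset.sum_mul]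
    exact Finset.sum_congr rfl fun w _ => hap w
  let _ : Algebra K hp.Corner := cornerAlgebra hp
  let g : LPAGen G → hp.Corner := fun x => match x with
    | .vert w => ⟨a w, (Subsemigroup.mem_corner_iff hp).2 ⟨hpa w, hap w⟩⟩
    | .edge e => ⟨b e, (Subsemigroup.mem_corner_iff hp).2
        ⟨by rw [← h.edge_left, ← mul_assoc, hpa], by rw [← h.edge_right, mul_assoc, hap]⟩⟩
    | .ghost e => ⟨c e, (Subsemigroup.mem_corner_iff hp).2
        ⟨by rw [← h.ghost_left, ← mul_assoc, hpa], by rw [← h.ghost_right, mul_assoc, hap]⟩⟩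
  let inc : hp.Corner →+ A :=
    { toFun := Subtype.val
      map_zero' := rfl
      map_add' := fun _ _ => rfl }
  have inc_inj : Function.Injective inc := Subtype.val_injective
  have inc_mul : ∀ x y, inc (x * y) = inc x * inc y := fun _ _ => rfl
  have inc_one : inc 1 = p := rfl
  have inc_smul : ∀ (k : K) x, inc (k • x) = k • inc x := by
    intro k x
    rw [Algebra.smul_def, inc_mul]
    change (k • p) * x.1 = k • x.1
    rw [smul_mul_assoc, ((Subsemigroup.mem_corner_iff hp).1 x.2).1]
  have hrel : ∀ ⦃x y⦄, LeavittRel K G x y →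
      FreeAlgebra.lift K g x = FreeAlgebra.lift K g y := by
    intro x y hxy
    apply inc_inj
    have ha : ∀ w, inc (g (.vert w)) = a w := fun _ => rfl
    have hb : ∀ e, inc (g (.edge e)) = b e := fun _ => rfl
    have hc : ∀ e, inc (g (.ghost e)) = c e := fun _ => rfl
    cases hxy with
    | vertMul u w =>
      have := h.vert_mul u w
      split_ifs at this ⊢ <;>
        simpa only [map_mul, FreeAlgebra.lift_ι_apply, inc_mul, ha, map_zero] using this
    | edgeLeft e =>
      simpa only [map_mul, FreeAlgebra.lift_ι_apply, inc_mul, ha, hb] using h.edge_left e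
    | edgeRight e =>
      simpa only [map_mul, FreeAlgebra.lift_ι_apply, inc_mul, ha, hb] using h.edge_right e
    | ghostLeft e =>
      simpa only [map_mul, FreeAlgebra.lift_ι_apply, inc_mul, ha, hc] using h.ghost_left e
    | ghostRight e =>
      simpa only [map_mul, FreeAlgebra.lift_ι_apply, inc_mul, ha, hc] using h.ghost_right e
    | ghostEdge e f =>
      have := h.ghost_edge e f
      split_ifs at this ⊢ <;>
        simpa only [map_mul, FreeAlgebra.lift_ι_apply, inc_mul, ha, hb, hc, map_zero] using this
    | cuntzKrieger w hw =>
      simpa only [map_mul, map_sum, FreeAlgebra.lift_ι_apply, inc_mul, ha, hb, hc] using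
        h.cuntz_krieger w hw
    | unit =>
      simp only [map_sum, map_one, FreeAlgebra.lift_ι_apply, ha, inc_one, hpdef]
  let Φ : LeavittPathAlgebra K G →ₐ[K] hp.Corner :=
    RingQuot.liftAlgHom K ⟨FreeAlgebra.lift K g, hrel⟩
  have hΦ : ∀ x, Φ (RingQuot.mkAlgHom K (LeavittRel K G) (FreeAlgebra.ι K x)) = g x := by
    intro x
    rw [RingQuot.liftAlgHom_mkAlgHom_apply, FreeAlgebra.lift_ι_apply]
  refine ⟨{ toFun := fun x => inc (Φ x)
            map_smul' := fun k x => by rw [map_smul, inc_smul]; rfl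
            map_zero' := by rw [map_zero, map_zero]
            map_add' := fun x y => by rw [map_add, map_add]
            map_mul' := fun x y => by rw [map_mul, inc_mul] }, ?_, ?_, ?_⟩
  · intro w
    exact congrArg inc (hΦ (.vert w))
  · intro e
    exact congrArg inc (hΦ (.edge e))
  · intro e
    exact congrArg inc (hΦ (.ghost e))

end LeavittPathAlgebra

end Leavitt

/-! ### The collapse at a vertex emitting one edge -/

section Collapse

open LeavittPathAlgebra

variable {K : Type} [Field K] {E G : FinGraph} {v : E.V} {f₀ : E.E}

/-- A description of the collapse `G` of `E` at a vertex `v` whose only emitted edge is `f₀`: the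
vertices of `G` are those of `E` other than `v`, its edges correspond to the edges of `E` not
starting at `v`, and the edges ending at `v` are redirected to `r(f₀)`. -/
structure CollapseData (E G : FinGraph) (v : E.V) (f₀ : E.E) where
  hs : E.s f₀ = v
  huniq : ∀ e : E.E, E.s e = v → e = f₀
  hloop : E.r f₀ ≠ v
  eV : G.V ≃ {w : E.V // w ≠ v}
  eE : G.E ≃ {e : E.E // E.s e ≠ v}
  hS : ∀ x, (eV (G.s x)).1 = E.s (eE x).1
  hR : ∀ x, (eV (G.r x)).1 = if E.r (eE x).1 = v then E.r f₀ else E.r (eE x).1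

/-- The first edge of the path in `E` that an edge of the collapse at `v` stands for: `e ↦ e` and `[ef] ↦ e`. -/
def collapseOrigin (hnl : ∀ e : E.E, E.s e = v → E.r e ≠ v) :
    (E.collapse v hnl).E → {e : E.E // E.s e ≠ v} :=
  Sum.elim (fun e => ⟨e.1, e.2.2⟩) (fun p => ⟨p.1.1, fun h => hnl p.1.1 h p.1.2⟩)

/-- The collapse graph fits the description `CollapseData`. -/
def collapseData (hs : E.s f₀ = v) (huniq : ∀ e : E.E, E.s e = v → e = f₀) (hloop : E.r f₀ ≠ v)
    (hnl : ∀ e : E.E, E.s e = v → E.r e ≠ v) : CollapseData E (E.collapse v hnl) v f₀ where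
  hs := hs
  huniq := huniq
  hloop := hloop
  eV := Equiv.refl _
  eE :=
    { toFun := collapseOrigin hnl
      invFun := fun e => if h : E.r e.1 = v then Sum.inr (⟨e.1, h⟩, ⟨f₀, hs⟩)
        else Sum.inl ⟨e.1, h, e.2⟩
      left_inv := by
        rintro (⟨e, he⟩ | ⟨⟨e, he⟩, ⟨f, hf⟩⟩)
        · exact dif_neg he.1
        · obtain rfl := huniq f hf
          exact dif_pos he
      right_inv := by
        rintro ⟨e, he⟩
        by_cases h : E.r e = v
        · exact congrArg (collapseOrigin hnl) (dif_pos h)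
        · exact congrArg (collapseOrigin hnl) (dif_neg h) }
  hS := by rintro (e | p) <;> rfl
  hR := by
    rintro (⟨e, he⟩ | ⟨⟨e, he⟩, ⟨f, hf⟩⟩)
    · exact (if_neg he.1).symm
    · obtain rfl := huniq f hf
      exact (if_pos he).symm

namespace CollapseData

theorem filter_eq (D : CollapseData E G v f₀) :
    Finset.univ.filter (fun e => E.s e = v) = {f₀} := by
  ext e
  simp only [Finset.mem_filter, Finset.mem_univ, true_and, Finset.mem_singleton]
  exact ⟨D.huniq e, fun he => he ▸ D.hs⟩

theorem vert_eq (D : CollapseData E G v f₀) :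
    vert K E v = edge K E f₀ * ghost K E f₀ := by
  rw [(isLeavittFamily K E).cuntz_krieger v ⟨f₀, D.hs⟩, D.filter_eq, Finset.sum_singleton]

variable (D : CollapseData E G v f₀)

theorem sum_edges {A : Type} [AddCommMonoid A] (h : E.E → A) (h0 : ∀ e, E.s e = v → h e = 0) :
    ∑ x, h (D.eE x).1 = ∑ e, h e := by
  rw [← Finset.sum_filter_of_ne (s := Finset.univ) (f := h) (p := fun e => E.s e ≠ v)
    (fun e _ he hv => he (h0 e hv)), D.eE.sum_comp fun e => h e.1]
  exact (Finset.sum_subtype _ (by simp) h).symm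

/-- An edge of `E` extended by `f₀` if it ends at `v`. -/
def tau (K : Type) [Field K] (v : E.V) (f₀ e : E.E) : LeavittPathAlgebra K E :=
  if E.r e = v then edge K E e * edge K E f₀ else edge K E e

/-- A ghost edge of `E` extended by `f₀*` if it starts at `v`. -/
def tauStar (K : Type) [Field K] (v : E.V) (f₀ e : E.E) : LeavittPathAlgebra K E :=
  if E.r e = v then ghost K E f₀ * ghost K E e else ghost K E e

/-- In `L_K(E)` the vertices other than `v`, the edges not touching `v` and the paths `e f₀`
through `v` form a Leavitt family for the collapse at `v`. -/
theorem isLeavittFamily_corner :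
    IsLeavittFamily G (fun w => vert K E (D.eV w).1) (fun x => tau K v f₀ (D.eE x).1)
      (fun x => tauStar K v f₀ (D.eE x).1) := by
  have h := isLeavittFamily K E
  constructor
  · intro u w
    rw [h.vert_mul]
    simp only [← Subtype.ext_iff, D.eV.apply_eq_iff_eq]
  · intro x
    rw [D.hS, tau]
    split_ifs
    · rw [← mul_assoc, h.edge_left]
    · exact h.edge_left _
  · intro x
    rw [D.hR, tau]
    split_ifs
    · rw [mul_assoc, h.edge_right]
    · exact h.edge_right _
  · intro x
    rw [D.hR, tauStar]
    split_ifs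
    · rw [← mul_assoc, h.ghost_left]
    · exact h.ghost_left _
  · intro x
    rw [D.hS, tauStar]
    split_ifs
    · rw [mul_assoc, h.ghost_right]
    · exact h.ghost_right _
  · intro x y
    rw [D.hR]
    by_cases hxy : x = y
    · subst hxy
      rw [if_pos rfl, tau, tauStar]
      split_ifs with hr
      · rw [mul_assoc, ← mul_assoc (ghost K E (D.eE x).1), h.ghost_edge, if_pos rfl, hr, ← D.hs,
          h.edge_left, h.ghost_edge, if_pos rfl]
      · rw [h.ghost_edge, if_pos rfl]
    · have hne : (D.eE x).1 ≠ (D.eE y).1 := fun hh =>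
        hxy (D.eE.injective (Subtype.ext hh))
      have h0 : ghost K E (D.eE x).1 * edge K E (D.eE y).1 = 0 := by
        rw [h.ghost_edge, if_neg hne]
      have h1 : ∀ z, ghost K E (D.eE x).1 * (edge K E (D.eE y).1 * z) = 0 := fun z => by
        rw [← mul_assoc, h0, zero_mul]
      rw [if_neg hxy, tau, tauStar]
      split_ifs <;> simp only [mul_assoc, h0, h1, mul_zero]
  · rintro w ⟨x₀, hx₀⟩
    have hreg : E.IsRegular (D.eV w).1 := ⟨(D.eE x₀).1, by rw [← D.hS, hx₀]⟩
    rw [h.cuntz_krieger _ hreg, Finset.sum_filter, Finset.sum_filter, ← D.sum_edges]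
    · refine Finset.sum_congr rfl fun x _ => ?_
      simp only [← D.hS, ← Subtype.ext_iff, D.eV.apply_eq_iff_eq]
      congr 1
      rw [tau, tauStar]
      split_ifs with hr
      · have hev : edge K E (D.eE x).1 * vert K E v = edge K E (D.eE x).1 := by
          conv_rhs => rw [← h.edge_right, hr]
        rw [mul_assoc, ← mul_assoc (edge K E f₀), ← D.vert_eq, ← mul_assoc, hev]
      · rfl
    · intro e he
      rw [if_neg]
      intro hh
      exact (D.eV w).2 (hh.symm.trans he)

/-- The index of the diagonal block of `2 × 2` matrices in which a vertex of `E` is placed: the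
second one for `v`, the first one for the other vertices. -/
def blk (v w : E.V) : Fin 2 := if w = v then 1 else 0

/-- The vertex of the collapse that represents a vertex of `E`: `r(f₀)` stands for `v`. -/
def repV (w : E.V) : G.V :=
  if h : w = v then D.eV.symm ⟨E.r f₀, D.hloop⟩ else D.eV.symm ⟨w, h⟩

/-- The entry of the matrix of an edge of `E`: the vertex `r(f₀)` for `f₀`, and the corresponding
edge of the collapse otherwise. -/
def repE (K : Type) [Field K] (e : E.E) : LeavittPathAlgebra K G :=
  if h : E.s e = v then vert K G (D.repV v) else edge K G (D.eE.symm ⟨e, h⟩)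

/-- The entry of the matrix of a ghost edge of `E`, dual to `repE`. -/
def repG (K : Type) [Field K] (e : E.E) : LeavittPathAlgebra K G :=
  if h : E.s e = v then vert K G (D.repV v) else ghost K G (D.eE.symm ⟨e, h⟩)

theorem repV_r : D.repV (E.r f₀) = D.repV v := by
  rw [repV, repV, dif_neg D.hloop, dif_pos rfl]

theorem repV_eV (w : G.V) : D.repV (D.eV w).1 = w := by
  rw [repV, dif_neg (D.eV w).2]
  exact D.eV.symm_apply_apply w

theorem s_symm (e : E.E) (h : E.s e ≠ v) : G.s (D.eE.symm ⟨e, h⟩) = D.repV (E.s e) := by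
  rw [← D.repV_eV (G.s _), D.hS, Equiv.apply_symm_apply]

theorem r_symm (e : E.E) (h : E.s e ≠ v) : G.r (D.eE.symm ⟨e, h⟩) = D.repV (E.r e) := by
  rw [← D.repV_eV (G.r _), D.hR, Equiv.apply_symm_apply]
  split_ifs with hr
  · rw [D.repV_r, hr]
  · rfl

/-- The `2 × 2` matrices over `L_K(G)` representing `E`, with `v` placed in the second diagonal
entry and all other vertices in the first, form a Leavitt family. -/
theorem isLeavittFamily_matrix :
    IsLeavittFamily E
      (fun w => Matrix.single (blk v w) (blk v w) (vert K G (D.repV w)))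
      (fun e => Matrix.single (blk v (E.s e)) (blk v (E.r e)) (D.repE K e))
      (fun e => Matrix.single (blk v (E.r e)) (blk v (E.s e)) (D.repG K e)) := by
  have h := isLeavittFamily K G
  have hidem : ∀ w, vert K G w * vert K G w = vert K G w := fun w => by
    rw [h.vert_mul, if_pos rfl]
  have hf : ∀ e, E.s e = v → D.repV (E.r e) = D.repV v := fun e he => by
    rw [D.huniq e he, D.repV_r]
  constructor
  · intro u w
    by_cases huw : u = w
    · subst huw
      rw [Matrix.single_mul_single_same, hidem, if_pos rfl]
    · rw [if_neg huw]
      by_cases hu : u = v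
      · have hw : w ≠ v := fun hh => huw (hu.trans hh.symm)
        rw [Matrix.single_mul_single_of_ne]
        simp [blk, hu, hw]
      · by_cases hw : w = v
        · rw [Matrix.single_mul_single_of_ne]
          simp [blk, hu, hw]
        · have hb : blk v u = blk v w := by simp [blk, hu, hw]
          rw [hb, Matrix.single_mul_single_same, h.vert_mul, if_neg, Matrix.single_zero]
          simpa [repV, hu, hw] using huw
  · intro e
    rw [Matrix.single_mul_single_same]
    congr 1
    rw [repE]
    split_ifs with h1
    · rw [h1, hidem]
    · rw [← D.s_symm e h1, h.edge_left]
  · intro e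
    rw [Matrix.single_mul_single_same]
    congr 1
    rw [repE]
    split_ifs with h1
    · rw [hf e h1, hidem]
    · rw [← D.r_symm e h1, h.edge_right]
  · intro e
    rw [Matrix.single_mul_single_same]
    congr 1
    rw [repG]
    split_ifs with h1
    · rw [hf e h1, hidem]
    · rw [← D.r_symm e h1, h.ghost_left]
  · intro e
    rw [Matrix.single_mul_single_same]
    congr 1
    rw [repG]
    split_ifs with h1
    · rw [h1, hidem]
    · rw [← D.s_symm e h1, h.ghost_right]
  · intro e e'
    by_cases hee : e = e'
    · subst hee
      rw [Matrix.single_mul_single_same, if_pos rfl]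
      congr 1
      rw [repE, repG]
      split_ifs with h1
      · rw [hf e h1, hidem]
      · rw [h.ghost_edge, if_pos rfl, D.r_symm]
    · rw [if_neg hee]
      by_cases h1 : E.s e = v
      · have h2 : E.s e' ≠ v := fun h2 => hee ((D.huniq e h1).trans (D.huniq e' h2).symm)
        rw [Matrix.single_mul_single_of_ne]
        simp [blk, h1, h2]
      · by_cases h2 : E.s e' = v
        · rw [Matrix.single_mul_single_of_ne]
          simp [blk, h1, h2]
        · have hb : blk v (E.s e) = blk v (E.s e') := by simp [blk, h1, h2]
          rw [hb, Matrix.single_mul_single_same, repG, repE, dif_neg h1, dif_neg h2, h.ghost_edge,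
            if_neg, Matrix.single_zero]
          simpa using hee
  · intro w hw
    by_cases hwv : w = v
    · subst hwv
      rw [D.filter_eq, Finset.sum_singleton, Matrix.single_mul_single_same, D.hs, repE, repG,
        dif_pos D.hs, dif_pos D.hs, hidem]
    · have hb : blk v w = 0 := by simp [blk, hwv]
      have hsum : ∀ e, (if E.s e = w then
          Matrix.single (blk v (E.s e)) (blk v (E.r e)) (D.repE K e) *
          Matrix.single (blk v (E.r e)) (blk v (E.s e)) (D.repG K e) else 0) =
          Matrix.singleAddMonoidHom 0 0
            (if E.s e = w then D.repE K e * D.repG K e else 0) := by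
        intro e
        split_ifs with he
        · rw [Matrix.single_mul_single_same, he, hb]
          rfl
        · rw [map_zero]
      rw [Finset.sum_filter, Finset.sum_congr rfl fun e _ => hsum e, ← map_sum, hb]
      change Matrix.single 0 0 _ = Matrix.single 0 0 _
      congr 1
      rw [← D.sum_edges]
      · obtain ⟨e₀, he₀⟩ := hw
        have hreg : G.IsRegular (D.repV w) :=
          ⟨D.eE.symm ⟨e₀, he₀ ▸ hwv⟩, by rw [D.s_symm, he₀]⟩
        have hiff : ∀ x, G.s x = D.repV w ↔ E.s (D.eE x).1 = w := by
          intro x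
          rw [← D.hS, repV, dif_neg hwv, Equiv.eq_symm_apply, Subtype.ext_iff]
        rw [h.cuntz_krieger _ hreg, Finset.sum_filter]
        refine Finset.sum_congr rfl fun x _ => ?_
        simp only [hiff]
        congr 1
        rw [repE, repG, dif_neg (D.eE x).2, dif_neg (D.eE x).2]
        simp only [Subtype.coe_eta, Equiv.symm_apply_apply]
      · intro e he
        rw [if_neg]
        rintro rfl
        exact hwv he

/-- The homomorphisms `φ : L_K(G) → L_K(E)` onto the corner at `ε = 1 - v` and
`ψ : L_K(E) → M₂(L_K(G))` satisfy the hypotheses of `moritaEquivalent_of_corner`. -/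
theorem moritaEquivalent (D : CollapseData E G v f₀) :
    MoritaEquivalent (LeavittPathAlgebra K E) (LeavittPathAlgebra K G) := by
  have h := isLeavittFamily K E
  have hG := isLeavittFamily K G
  obtain ⟨φ, φv, φe, φg⟩ := exists_lift (K := K) (D.isLeavittFamily_corner (K := K))
  obtain ⟨ψ, ψv, ψe, ψg⟩ := exists_lift (K := K) (D.isLeavittFamily_matrix (K := K))
  have hφ1 : φ 1 = 1 - vert K E v := by
    rw [one_eq, map_sum, one_eq, Finset.sum_congr rfl fun w _ => φv w,
      D.eV.sum_comp fun w => vert K E w.1, ← Finset.sum_erase_eq_sub (Finset.mem_univ v)]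
    exact (Finset.sum_subtype _ (by simp) _).symm
  set ε : LeavittPathAlgebra K E := φ 1 with hε
  have hεid : ε * ε = ε := by rw [hε, ← map_mul, one_mul]
  have ε_vert : ∀ u, ε * vert K E u = if u = v then 0 else vert K E u := by
    intro u
    rw [hφ1, sub_mul, one_mul, h.vert_mul]
    by_cases hu : u = v
    · rw [if_pos hu, if_pos hu.symm, hu, sub_self]
    · rw [if_neg hu, if_neg (Ne.symm hu), sub_zero]
  have vert_ε : ∀ u, vert K E u * ε = if u = v then 0 else vert K E u := by
    intro u
    rw [hφ1, mul_sub, mul_one, h.vert_mul]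
    split_ifs
    · rw [sub_self]
    · rw [sub_zero]
  have ε_edge : ∀ e, ε * edge K E e = if E.s e = v then 0 else edge K E e := by
    intro e
    rw [← h.edge_left, ← mul_assoc, ε_vert, ite_mul, zero_mul]
  have edge_ε : ∀ e, edge K E e * ε = if E.r e = v then 0 else edge K E e := by
    intro e
    rw [← h.edge_right, mul_assoc, vert_ε, mul_ite, mul_zero]
  have ε_ghost : ∀ e, ε * ghost K E e = if E.r e = v then 0 else ghost K E e := by
    intro e
    rw [← h.ghost_left, ← mul_assoc, ε_vert, ite_mul, zero_mul]
  have ghost_ε : ∀ e, ghost K E e * ε = if E.s e = v then 0 else ghost K E e := by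
    intro e
    rw [← h.ghost_right, mul_assoc, vert_ε, mul_ite, mul_zero]
  have vert_f : ∀ u, vert K E u * edge K E f₀ = if u = v then edge K E f₀ else 0 := by
    intro u
    rw [← h.edge_left, ← mul_assoc, h.vert_mul, D.hs, ite_mul, zero_mul]
    split_ifs with hu
    · rw [hu]
    · rfl
  have g_vert : ∀ u, ghost K E f₀ * vert K E u = if u = v then ghost K E f₀ else 0 := by
    intro u
    rw [← h.ghost_right, mul_assoc, h.vert_mul, D.hs, mul_ite, mul_zero]
    simp only [eq_comm]
  have edge_f : ∀ e, E.r e ≠ v → edge K E e * edge K E f₀ = 0 := by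
    intro e he
    rw [← h.edge_right, mul_assoc, vert_f, if_neg he, mul_zero]
  have g_ghost : ∀ e, E.r e ≠ v → ghost K E f₀ * ghost K E e = 0 := by
    intro e he
    rw [← h.ghost_left e, ← mul_assoc, g_vert, if_neg he, zero_mul]
  have g_f : ghost K E f₀ * edge K E f₀ = vert K E (E.r f₀) := by
    rw [h.ghost_edge, if_pos rfl]
  -- The decomposition `1 = ε ε + f₀ f₀*` cuts an element `x` into the entries `L i * x * M j`,
  -- which multiply like `2 × 2` matrices.
  let L : Fin 2 → LeavittPathAlgebra K E := ![ε, ghost K E f₀]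
  let M : Fin 2 → LeavittPathAlgebra K E := ![ε, edge K E f₀]
  have hML : ∑ k, M k * L k = 1 := by
    simp only [Fin.sum_univ_two, M, L, Matrix.cons_val_zero, Matrix.cons_val_one]
    rw [hεid, ← D.vert_eq, hφ1, sub_add_cancel]
  have hfull : IsFullIdempotent ε := by
    refine ⟨hεid, 2, M, L, ?_⟩
    rw [← hML]
    refine Finset.sum_congr rfl fun k _ => ?_
    congr 1
    fin_cases k
    · exact hεid
    · exact (edge_ε f₀).trans (if_neg D.hloop)
  -- The four entries of every element of `L_K(E)` lie in the image of `φ`.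
  let T := NonUnitalAlgHom.range φ
  have Tv : ∀ u, u ≠ v → vert K E u ∈ T := fun u hu =>
    ⟨vert K G (D.eV.symm ⟨u, hu⟩), by
      change φ _ = _
      rw [φv, Equiv.apply_symm_apply]⟩
  have Te : ∀ e, E.s e ≠ v → tau K v f₀ e ∈ T := fun e he =>
    ⟨edge K G (D.eE.symm ⟨e, he⟩), by
      change φ _ = _
      rw [φe, Equiv.apply_symm_apply]⟩
  have Tg : ∀ e, E.s e ≠ v → tauStar K v f₀ e ∈ T := fun e he =>
    ⟨ghost K G (D.eE.symm ⟨e, he⟩), by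
      change φ _ = _
      rw [φg, Equiv.apply_symm_apply]⟩
  have hT : ∀ x i j, L i * x * M j ∈ T := by
    intro x
    induction x using LeavittPathAlgebra.induction with
    | zero =>
      intro i j
      rw [mul_zero, zero_mul]
      exact T.zero_mem
    | vert u =>
      rw [Fin.forall_fin_two, Fin.forall_fin_two, Fin.forall_fin_two]
      simp only [M, L, Matrix.cons_val_zero, Matrix.cons_val_one]
      by_cases hu : u = v
      · simp only [ε_vert, g_vert, if_pos hu, zero_mul, ghost_ε, if_pos D.hs, g_f]
        exact ⟨⟨T.zero_mem, T.zero_mem⟩, T.zero_mem, Tv _ D.hloop⟩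
      · simp only [ε_vert, g_vert, if_neg hu, zero_mul, vert_ε, vert_f]
        exact ⟨⟨Tv u hu, T.zero_mem⟩, T.zero_mem, T.zero_mem⟩
    | edge e =>
      rw [Fin.forall_fin_two, Fin.forall_fin_two, Fin.forall_fin_two]
      simp only [M, L, Matrix.cons_val_zero, Matrix.cons_val_one]
      by_cases he : E.s e = v
      · obtain rfl := D.huniq e he
        simp only [ε_edge, if_pos he, zero_mul, g_f, vert_ε, vert_f, if_neg D.hloop]
        exact ⟨⟨T.zero_mem, T.zero_mem⟩, Tv _ D.hloop, T.zero_mem⟩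
      · have hne : f₀ ≠ e := fun hh => he (hh ▸ D.hs)
        have hτ := Te e he
        rw [tau] at hτ
        simp only [ε_edge, if_neg he, h.ghost_edge, if_neg hne, zero_mul, edge_ε]
        by_cases hr : E.r e = v
        · rw [if_pos hr] at hτ ⊢
          exact ⟨⟨T.zero_mem, hτ⟩, T.zero_mem, T.zero_mem⟩
        · rw [if_neg hr] at hτ ⊢
          rw [edge_f e hr]
          exact ⟨⟨hτ, T.zero_mem⟩, T.zero_mem, T.zero_mem⟩
    | ghost e =>
      rw [Fin.forall_fin_two, Fin.forall_fin_two, Fin.forall_fin_two]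
      simp only [M, L, Matrix.cons_val_zero, Matrix.cons_val_one, mul_assoc]
      by_cases he : E.s e = v
      · obtain rfl := D.huniq e he
        simp only [ghost_ε, if_pos he, mul_zero, g_f, ε_vert, g_vert, if_neg D.hloop]
        exact ⟨⟨T.zero_mem, Tv _ D.hloop⟩, T.zero_mem, T.zero_mem⟩
      · have hne : e ≠ f₀ := fun hh => he (hh ▸ D.hs)
        have hτ := Tg e he
        rw [tauStar] at hτ
        simp only [ghost_ε, if_neg he, h.ghost_edge, if_neg hne, mul_zero, ε_ghost]
        by_cases hr : E.r e = v
        · rw [if_pos hr] at hτ ⊢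
          exact ⟨⟨T.zero_mem, T.zero_mem⟩, hτ, T.zero_mem⟩
        · rw [if_neg hr] at hτ ⊢
          rw [g_ghost e hr]
          exact ⟨⟨hτ, T.zero_mem⟩, T.zero_mem, T.zero_mem⟩
    | add x y hx hy =>
      intro i j
      rw [mul_add, add_mul]
      exact T.add_mem (hx i j) (hy i j)
    | mul x y hx hy =>
      intro i j
      have hxy : L i * (x * y) * M j = ∑ k, (L i * x * M k) * (L k * y * M j) := by
        calc L i * (x * y) * M j = L i * x * 1 * (y * M j) := by
              simp only [mul_one, mul_assoc]
          _ = ∑ k, (L i * x * M k) * (L k * y * M j) := by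
              rw [← hML, Finset.mul_sum, Finset.sum_mul]
              simp only [mul_assoc]
      rw [hxy]
      exact sum_mem fun k _ => T.mul_mem (hx i k) (hy k j)
    | smul k x hx =>
      intro i j
      rw [mul_smul_comm, smul_mul_assoc]
      exact SMulMemClass.smul_mem k (hx i j)
  -- `ψ` carries `φ s` to the matrix with `s` in the upper left corner.
  have hψ : ∀ s, ψ (φ s) = Matrix.single 0 0 s := by
    have blk0 : ∀ u, u ≠ v → blk v u = 0 := fun u hu => if_neg hu
    have blkv : blk v v = 1 := if_pos rfl
    intro s
    induction s using LeavittPathAlgebra.induction with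
    | zero => rw [map_zero, map_zero, Matrix.single_zero]
    | vert w => rw [φv, ψv, D.repV_eV, blk0 _ (D.eV w).2]
    | edge x =>
      have hx := (D.eE x).2
      have hrep : D.repE K (D.eE x).1 = edge K G x := by
        rw [repE, dif_neg hx]
        simp only [Subtype.coe_eta, Equiv.symm_apply_apply]
      have hr' : D.repV (E.r (D.eE x).1) = G.r x := by
        rw [← D.r_symm _ hx]
        simp only [Subtype.coe_eta, Equiv.symm_apply_apply]
      rw [φe, tau]
      split_ifs with hr
      · have hf : D.repE K f₀ = vert K G (G.r x) := by
          rw [repE, dif_pos D.hs, ← hr', hr]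
        rw [map_mul, ψe, ψe, hr, D.hs, Matrix.single_mul_single_same, hrep, hf, hG.edge_right,
          blk0 _ hx, blk0 _ D.hloop]
      · rw [ψe, hrep, blk0 _ hx, blk0 _ hr]
    | ghost x =>
      have hx := (D.eE x).2
      have hrep : D.repG K (D.eE x).1 = ghost K G x := by
        rw [repG, dif_neg hx]
        simp only [Subtype.coe_eta, Equiv.symm_apply_apply]
      have hr' : D.repV (E.r (D.eE x).1) = G.r x := by
        rw [← D.r_symm _ hx]
        simp only [Subtype.coe_eta, Equiv.symm_apply_apply]
      rw [φg, tauStar]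
      split_ifs with hr
      · have hf : D.repG K f₀ = vert K G (G.r x) := by
          rw [repG, dif_pos D.hs, ← hr', hr]
        rw [map_mul, ψg, ψg, hr, D.hs, Matrix.single_mul_single_same, hrep, hf, hG.ghost_left,
          blk0 _ hx, blk0 _ D.hloop]
      · rw [ψg, hrep, blk0 _ hx, blk0 _ hr]
    | add x y hx hy => rw [map_add, map_add, hx, hy, Matrix.single_add]
    | mul x y hx hy => rw [map_mul, map_mul, hx, hy, Matrix.single_mul_single_same]
    | smul k x hx => rw [map_smul, map_smul, hx, Matrix.smul_single]
  exact moritaEquivalent_of_corner (NonUnitalRingHomClass.toNonUnitalRingHom φ) hfull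
    (fun x => hT x 0 0) (NonUnitalRingHomClass.toNonUnitalRingHom ψ) 0 hψ

end CollapseData

end Collapse

/-- Collapsing at a regular vertex emitting precisely one edge, which is
not a loop, preserves Morita equivalence of Leavitt path algebras. -/
theorem collapse_oneEdge_moritaEquivalent (K : Type) [Field K] (E : FinGraph) (v : E.V)
    (f₀ : E.E) (hs : E.s f₀ = v) (huniq : ∀ e : E.E, E.s e = v → e = f₀)
    (hloop : E.r f₀ ≠ v) :
    MoritaEquivalent (LeavittPathAlgebra K E)
      (LeavittPathAlgebra K (E.collapse v (fun e he => by rw [huniq e he]; exact hloop))) := by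
  exact (collapseData hs huniq hloop _).moritaEquivalent
end
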